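/- arXiv:math/0210228 — 2 statements merged into one kernel-verified Lean document; each statement's English description precedes it below -/
import Mathlib

section
/- Let p > 2, let 𝒫 and 𝒬 be families of partition–weight pairs on countable sets A and B respectively, each satisfying the envelope property, and let X = X(𝒫), Y = X(𝒬) with natural coordinate bases (x_a)_{a∈A} and (y_b)_{b∈B}. Suppose S : X → L_p([0,1]) and T : Y → L_p([0,1]) are bounded linear maps that are bounded below. Then there is a constant C > 0 such that for all scalars (c_{a,b})_{a∈A,b∈B} with only finitely many nonzero, every (P,(w_a)) ∈ 𝒫 and every (Q,(w'_b)) ∈ 𝒬: ‖Σ_{a,b} c_{a,b} (Sx_a ⊗ Ty_b)‖_{L_p([0,1]²)} ≥ C (Σ_{p₀∈P, q₀∈Q} (Σ_{a∈p₀, b∈q₀} c_{a,b}² w_a² (w'_b)²)^{p/2})^{1/p}. -/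
open scoped ENNReal
open MeasureTheory Filter

noncomputable section

variable {α : Type*}

/-- `P` is a partition of the type `α`: a collection of pairwise disjoint
nonempty subsets of `α` whose union is all of `α`. -/
def IsPartition (P : Set (Set α)) : Prop :=
  (∀ N ∈ P, N.Nonempty) ∧ P.PairwiseDisjoint id ∧ ⋃₀ P = Set.univ

/-- A weight function takes values in `(0,1]`. -/
def IsWeight (W : α → ℝ) : Prop := ∀ a, W a ∈ Set.Ioc (0 : ℝ) 1

/-- `‖x‖_{P,W} = (Σ_{N∈P} (Σ_{j∈N} x_j² w_j²)^{p/2})^{1/p}`, valued in `[0,∞]`. -/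
def pwNorm (p : ℝ) (P : Set (Set α)) (W : α → ℝ) (x : α → ℝ) : ℝ≥0∞ :=
  (∑' N : P, (∑' j : N.1, ENNReal.ofReal ((x j.1) ^ 2 * (W j.1) ^ 2)) ^ (p / 2)) ^ (1 / p)

/-- A partition–weight pair on `α`. -/
abbrev PWPair (α : Type*) := Set (Set α) × (α → ℝ)

/-- Every member of the family is a genuine partition–weight pair. -/
def IsPWFamily (𝒞 : Set (PWPair α)) : Prop :=
  ∀ PW ∈ 𝒞, IsPartition PW.1 ∧ IsWeight PW.2

/-- `‖x‖_𝒞 = sup_{(P,W) ∈ 𝒞} ‖x‖_{P,W}`. -/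
def famNorm (p : ℝ) (𝒞 : Set (PWPair α)) (x : α → ℝ) : ℝ≥0∞ :=
  ⨆ PW ∈ 𝒞, pwNorm p PW.1 PW.2 x

/-- The block of the partition `Q` containing `b` (for a genuine partition this is
the unique element of `Q` containing `b`). -/
def blockOf (Q : Set (Set α)) (b : α) : Set α := ⋃₀ {q ∈ Q | b ∈ q}

/-- The partition `P(Q,T)` obtained from a partition `Q` and a choice `T` of a
partition–weight pair for each block of `Q`. -/
def envPartition (Q : Set (Set α)) (T : Set α → PWPair α) : Set (Set α) :=
  {K | K.Nonempty ∧ ∃ q ∈ Q, ∃ s ∈ (T q).1, K = q ∩ s}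

/-- The weight `W(Q,T)`: on the block `q` of `Q` it is the weight chosen by `T q`. -/
def envWeight (Q : Set (Set α)) (T : Set α → PWPair α) : α → ℝ :=
  fun b => (T (blockOf Q b)).2 b

/-- A family of partition–weight pairs satisfies the envelope property if it is
closed under the operation `(Q, T) ↦ (P(Q,T), W(Q,T))`. -/
def EnvelopeProp (𝒞 : Set (PWPair α)) : Prop :=
  ∀ Q : Set (Set α), IsPartition Q → ∀ T : Set α → PWPair α, (∀ q ∈ Q, T q ∈ 𝒞) →
    (envPartition Q T, envWeight Q T) ∈ 𝒞

/-- The family `𝒞̃` of all pairs `(P(Q,T), W(Q,T))`. -/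
def envFam (𝒞 : Set (PWPair α)) : Set (PWPair α) :=
  {PW | ∃ Q T, IsPartition Q ∧ (∀ q ∈ Q, T q ∈ 𝒞) ∧
    PW = (envPartition Q T, envWeight Q T)}

/-- The envelope norm generated by `𝒞`. -/
def envNorm (p : ℝ) (𝒞 : Set (PWPair α)) (x : α → ℝ) : ℝ≥0∞ := famNorm p (envFam 𝒞) x

/-- The coordinate basis vector `e_a` of a sequence space on `α`. -/
def coordVec (a : α) : α → ℝ := Set.indicator {a} 1

theorem sum_sign_mul_sign {ι : Type*} [Fintype ι] [DecidableEq ι] {i j : ι} (h : i ≠ j) :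
    ∑ ε : ι → ℤˣ, ((ε i : ℤ) : ℝ) * ((ε j : ℤ) : ℝ) = 0 := by
  have key := Equiv.sum_comp (Equiv.mulLeft (Pi.mulSingle i (-1) : ι → ℤˣ))
    (fun ε => ((ε i : ℤ) : ℝ) * ((ε j : ℤ) : ℝ))
  simp [Pi.mulSingle_eq_of_ne h.symm] at key
  linarith

/-- Orthogonality of the Rademacher signs. -/
theorem sum_sign_combination_sq {ι : Type*} [Fintype ι] [DecidableEq ι] (y : ι → ℝ) :
    ∑ ε : ι → ℤˣ, (∑ i, ((ε i : ℤ) : ℝ) * y i) ^ 2 =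
      Fintype.card (ι → ℤˣ) * ∑ i, y i ^ 2 := by
  have h1 : ∀ ε : ι → ℤˣ, (∑ i, ((ε i : ℤ) : ℝ) * y i) ^ 2 =
      ∑ i, ∑ j, (((ε i : ℤ) : ℝ) * ((ε j : ℤ) : ℝ)) * (y i * y j) := fun ε => by
    rw [sq, Finset.sum_mul_sum]
    exact Finset.sum_congr rfl fun i _ => Finset.sum_congr rfl fun j _ => by ring
  simp_rw [h1]
  rw [Finset.sum_comm, Finset.mul_sum]
  refine Finset.sum_congr rfl fun i _ => ?_
  rw [Finset.sum_comm, Finset.sum_eq_single i]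
  · have : ∀ ε : ι → ℤˣ, ((ε i : ℤ) : ℝ) * ((ε i : ℤ) : ℝ) = 1 := fun ε => by
      rcases Int.units_eq_one_or (ε i) with h | h <;> simp [h]
    simp only [this, one_mul, Finset.sum_const, Finset.card_univ, nsmul_eq_mul, sq]
  · intro j _ hj
    rw [← Finset.sum_mul, sum_sign_mul_sign hj.symm, zero_mul]
  · simp

theorem sum_exp_sign_combination_le {ι : Type*} [Fintype ι] [DecidableEq ι] (y : ι → ℝ) :
    ∑ ε : ι → ℤˣ, Real.exp (∑ i, ((ε i : ℤ) : ℝ) * y i) ≤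
      Fintype.card (ι → ℤˣ) * Real.exp ((∑ i, y i ^ 2) / 2) := by
  have h1 : ∑ ε : ι → ℤˣ, Real.exp (∑ i, ((ε i : ℤ) : ℝ) * y i) =
      ∏ i, ∑ e : ℤˣ, Real.exp (((e : ℤ) : ℝ) * y i) := by
    rw [Finset.prod_univ_sum, Fintype.piFinset_univ]
    simp only [Real.exp_sum]
  have h2 : ∀ i, ∑ e : ℤˣ, Real.exp (((e : ℤ) : ℝ) * y i) ≤ 2 * Real.exp (y i ^ 2 / 2) := by
    intro i
    have h3 : ∑ e : ℤˣ, Real.exp (((e : ℤ) : ℝ) * y i) = 2 * Real.cosh (y i) := by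
      rw [show (Finset.univ : Finset ℤˣ) = {1, -1} from rfl, Finset.sum_pair (by decide), Real.cosh_eq]
      simp
      ring
    rw [h3]
    gcongr
    exact Real.cosh_le_exp_half_sq _
  rw [h1]
  refine (Finset.prod_le_prod (fun i _ => by positivity) fun i _ => h2 i).trans ?_
  rw [Finset.prod_mul_distrib, ← Real.exp_sum, Finset.sum_div]
  simp

/-- Khintchine's upper inequality. -/
theorem sum_abs_sign_combination_rpow_le {ι : Type*} [Fintype ι] [DecidableEq ι] {p : ℝ}
    (hp : 0 < p) (y : ι → ℝ) :
    ∑ ε : ι → ℤˣ, |∑ i, ((ε i : ℤ) : ℝ) * y i| ^ p ≤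
      Fintype.card (ι → ℤˣ) * (2 * Real.exp (p ^ 2 / 2)) * (∑ i, y i ^ 2) ^ (p / 2) := by
  set σ := ∑ i, y i ^ 2 with hσ
  have hσ0 : 0 ≤ σ := by positivity
  rcases hσ0.eq_or_lt with h0 | h0
  · have : ∀ i, y i = 0 := fun i => by
      have := (Finset.sum_eq_zero_iff_of_nonneg (fun i _ => sq_nonneg (y i))).1 h0.symm i
        (Finset.mem_univ i)
      simpa using this
    simp [this, Real.zero_rpow hp.ne']
    positivity
  set r := √σ with hr
  have hr0 : 0 < r := Real.sqrt_pos.2 h0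
  have hrs : r ^ 2 = σ := Real.sq_sqrt hσ0
  have hrp : σ ^ (p / 2) = r ^ p := by
    rw [hr, Real.sqrt_eq_rpow, ← Real.rpow_mul hσ0]; ring_nf
  have h1 : ∀ u : ℝ, |u| ^ p ≤ r ^ p * (Real.exp (p / r * u) + Real.exp (p / r * -u)) := by
    intro u
    have h2 : |u| = r * (|u| / r) := by field_simp
    rw [h2, Real.mul_rpow hr0.le (by positivity)]
    gcongr
    have h3 : (|u| / r) ^ p ≤ Real.exp (p / r * |u|) := by
      have h4 : |u| / r ≤ Real.exp (|u| / r) := by linarith [Real.add_one_le_exp (|u| / r)]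
      calc (|u| / r) ^ p ≤ Real.exp (|u| / r) ^ p := by gcongr
        _ = _ := by rw [← Real.exp_mul]; ring_nf
    rcases abs_choice u with h | h <;> rw [h] at h3 ⊢ <;>
      linarith [Real.exp_pos (p / r * u), Real.exp_pos (p / r * -u)]
  have h5 : ∀ δ : ℝ, δ ^ 2 = 1 →
      ∑ ε : ι → ℤˣ, Real.exp (p / r * (δ * ∑ i, ((ε i : ℤ) : ℝ) * y i)) ≤
        Fintype.card (ι → ℤˣ) * Real.exp (p ^ 2 / 2) := by
    intro δ hδ
    have h6 := sum_exp_sign_combination_le fun i => p / r * δ * y i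
    have h7 : ∑ i, (p / r * δ * y i) ^ 2 = p ^ 2 := by
      simp_rw [mul_pow, hδ]
      rw [← Finset.mul_sum, ← hσ, ← hrs]
      field_simp
    rw [h7] at h6
    refine le_trans (le_of_eq ?_) h6
    refine Finset.sum_congr rfl fun ε _ => ?_
    rw [Finset.mul_sum, Finset.mul_sum]
    congr 1
    exact Finset.sum_congr rfl fun i _ => by ring
  have h8 := h5 1 (by norm_num)
  have h9 := h5 (-1) (by norm_num)
  simp only [one_mul, neg_one_mul] at h8 h9
  calc _ ≤ ∑ ε : ι → ℤˣ, r ^ p * (Real.exp (p / r * ∑ i, ((ε i : ℤ) : ℝ) * y i) +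
        Real.exp (p / r * -∑ i, ((ε i : ℤ) : ℝ) * y i)) := Finset.sum_le_sum fun ε _ => h1 _
    _ ≤ r ^ p * (Fintype.card (ι → ℤˣ) * Real.exp (p ^ 2 / 2) +
        Fintype.card (ι → ℤˣ) * Real.exp (p ^ 2 / 2)) := by
      rw [← Finset.mul_sum, Finset.sum_add_distrib]
      gcongr
    _ = _ := by rw [hrp]; ring

theorem sum_enorm_sign_combination_rpow_le {ι : Type*} [Fintype ι] [DecidableEq ι] {p : ℝ}
    (hp : 0 < p) (y : ι → ℝ) :
    ∑ ε : ι → ℤˣ, ‖∑ i, ((ε i : ℤ) : ℝ) * y i‖ₑ ^ p ≤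
      Fintype.card (ι → ℤˣ) * (ENNReal.ofReal (2 * Real.exp (p ^ 2 / 2)) *
        (∑ i, ENNReal.ofReal (y i ^ 2)) ^ (p / 2)) := by
  have h := ENNReal.ofReal_le_ofReal (sum_abs_sign_combination_rpow_le hp y)
  rw [ENNReal.ofReal_sum_of_nonneg (fun _ _ => by positivity), ENNReal.ofReal_mul (by positivity),
    ENNReal.ofReal_mul (by positivity), ENNReal.ofReal_natCast,
    ← ENNReal.ofReal_rpow_of_nonneg (by positivity) (by positivity),
    ENNReal.ofReal_sum_of_nonneg (fun _ _ => by positivity), mul_assoc] at h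
  refine le_trans (le_of_eq ?_) h
  refine Finset.sum_congr rfl fun ε _ => ?_
  rw [Real.enorm_eq_ofReal_abs, ENNReal.ofReal_rpow_of_nonneg (abs_nonneg _) hp.le]

theorem sum_ofReal_sign_combination_sq {ι : Type*} [Fintype ι] [DecidableEq ι] (y : ι → ℝ)
    (v : ℝ) :
    ∑ ε : ι → ℤˣ, ENNReal.ofReal ((∑ i, ((ε i : ℤ) : ℝ) * y i) ^ 2 * v ^ 2) =
      Fintype.card (ι → ℤˣ) * ∑ i, ENNReal.ofReal (y i ^ 2 * v ^ 2) := by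
  rw [← ENNReal.ofReal_sum_of_nonneg (fun _ _ => by positivity),
    ← ENNReal.ofReal_sum_of_nonneg (fun _ _ => by positivity), ← ENNReal.ofReal_natCast,
    ← ENNReal.ofReal_mul (by positivity), ← Finset.sum_mul, sum_sign_combination_sq,
    ← Finset.sum_mul, mul_assoc]

theorem card_mul_mean_rpow_le {κ : Type*} [Fintype κ] [Nonempty κ] {q : ℝ} (hq : 1 ≤ q)
    (z : κ → ℝ≥0∞) (m : ℝ≥0∞) (hm : ∑ e, z e = Fintype.card κ * m) :
    Fintype.card κ * m ^ q ≤ ∑ e, z e ^ q := by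
  have hn0 : (Fintype.card κ : ℝ≥0∞) ≠ 0 := by simp
  have hn1 : (Fintype.card κ : ℝ≥0∞) ≠ ⊤ := ENNReal.natCast_ne_top _
  have h := ENNReal.rpow_arith_mean_le_arith_mean_rpow Finset.univ
    (fun _ : κ => (Fintype.card κ : ℝ≥0∞)⁻¹) z (by simp [ENNReal.mul_inv_cancel hn0 hn1]) hq
  rw [← Finset.mul_sum, ← Finset.mul_sum, hm, ← mul_assoc, ENNReal.inv_mul_cancel hn0 hn1,
    one_mul] at h
  calc _ ≤ (Fintype.card κ : ℝ≥0∞) * ((Fintype.card κ : ℝ≥0∞)⁻¹ * ∑ e, z e ^ q) := by gcongr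
    _ = _ := by rw [← mul_assoc, ENNReal.mul_inv_cancel hn0 hn1, one_mul]

/-- A lower estimate for combinations of the `g b` passes to square functions. -/
theorem lower_estimate_squareFunction {ι β Ω : Type*} [Fintype ι] [MeasurableSpace Ω]
    {μ : Measure Ω} {p : ℝ} (hp : 2 < p) (Q : Set (Set β)) (v : β → ℝ) (G : Finset β)
    (g : β → Ω → ℝ) (hg : ∀ b, Measurable (g b)) (k : ℝ≥0∞)
    (hlow : ∀ y : β → ℝ, (∀ b ∉ G, y b = 0) →
      k * ∑' M : Q, (∑' b : M.1, ENNReal.ofReal (y b.1 ^ 2 * v b.1 ^ 2)) ^ (p / 2) ≤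
        ∫⁻ t, ‖∑ b ∈ G, y b * g b t‖ₑ ^ p ∂μ)
    (d : ι → β → ℝ) (hd : ∀ i, ∀ b ∉ G, d i b = 0) :
    k * ∑' M : Q, (∑' b : M.1, ∑ i, ENNReal.ofReal (d i b.1 ^ 2 * v b.1 ^ 2)) ^ (p / 2) ≤
      ENNReal.ofReal (2 * Real.exp (p ^ 2 / 2)) *
        ∫⁻ t, (∑ i, ENNReal.ofReal ((∑ b ∈ G, d i b * g b t) ^ 2)) ^ (p / 2) ∂μ := by
  classical
  set n : ℝ≥0∞ := (Fintype.card (ι → ℤˣ) : ℝ≥0∞) with hn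
  have hn0 : n ≠ 0 := by simp [hn]
  have hn1 : n ≠ ⊤ := ENNReal.natCast_ne_top _
  rw [← ENNReal.mul_le_mul_iff_right hn0 hn1]
  calc n * (k * ∑' M : Q,
        (∑' b : M.1, ∑ i, ENNReal.ofReal (d i b.1 ^ 2 * v b.1 ^ 2)) ^ (p / 2))
      = k * ∑' M : Q,
        n * (∑' b : M.1, ∑ i, ENNReal.ofReal (d i b.1 ^ 2 * v b.1 ^ 2)) ^ (p / 2) := by
        rw [ENNReal.tsum_mul_left]; ring
    _ ≤ k * ∑' M : Q, ∑ ε : ι → ℤˣ, (∑' b : M.1,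
          ENNReal.ofReal ((∑ i, ((ε i : ℤ) : ℝ) * d i b.1) ^ 2 * v b.1 ^ 2)) ^ (p / 2) := by
        gcongr with M
        refine card_mul_mean_rpow_le (by linarith) _ _ ?_
        rw [← Summable.tsum_finsetSum fun _ _ => ENNReal.summable, ← ENNReal.tsum_mul_left]
        exact tsum_congr fun b => sum_ofReal_sign_combination_sq _ _
    _ = ∑ ε : ι → ℤˣ, k * ∑' M : Q, (∑' b : M.1,
          ENNReal.ofReal ((∑ i, ((ε i : ℤ) : ℝ) * d i b.1) ^ 2 * v b.1 ^ 2)) ^ (p / 2) := by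
        rw [Summable.tsum_finsetSum fun _ _ => ENNReal.summable, Finset.mul_sum]
    _ ≤ ∑ ε : ι → ℤˣ,
          ∫⁻ t, ‖∑ b ∈ G, (∑ i, ((ε i : ℤ) : ℝ) * d i b) * g b t‖ₑ ^ p ∂μ := by
        gcongr with ε
        exact hlow (fun b => ∑ i, ((ε i : ℤ) : ℝ) * d i b) fun b hb => by simp [hd _ b hb]
    _ = ∫⁻ t, ∑ ε : ι → ℤˣ, ‖∑ i, ((ε i : ℤ) : ℝ) * ∑ b ∈ G, d i b * g b t‖ₑ ^ p ∂μ := by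
        rw [lintegral_finsetSum]
        · refine Finset.sum_congr rfl fun ε _ => lintegral_congr fun t => ?_
          simp_rw [Finset.sum_mul, Finset.mul_sum]
          rw [Finset.sum_comm]
          simp_rw [mul_assoc]
        · intro ε _
          fun_prop
    _ ≤ ∫⁻ t, n * (ENNReal.ofReal (2 * Real.exp (p ^ 2 / 2)) *
          (∑ i, ENNReal.ofReal ((∑ b ∈ G, d i b * g b t) ^ 2)) ^ (p / 2)) ∂μ := by
        gcongr with t
        exact sum_enorm_sign_combination_rpow_le (by linarith) _
    _ = _ := by
        rw [lintegral_const_mul' _ _ hn1, lintegral_const_mul' _ _ ENNReal.ofReal_ne_top]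

/-- A superadditivity of the Lebesgue integral that needs no countability. -/
theorem tsum_lintegral_le {κ Ω : Type*} [MeasurableSpace Ω] {μ : Measure Ω}
    {f : κ → Ω → ℝ≥0∞} (hf : ∀ i, Measurable (f i)) :
    ∑' i, ∫⁻ t, f i t ∂μ ≤ ∫⁻ t, ∑' i, f i t ∂μ := by
  rw [ENNReal.tsum_eq_iSup_sum]
  refine iSup_le fun s => ?_
  rw [← lintegral_finsetSum _ fun i _ => hf i]
  exact lintegral_mono fun t => ENNReal.sum_le_tsum s

theorem pwNorm_rpow {α : Type*} {p : ℝ} (hp : 0 < p) (P : Set (Set α)) (W x : α → ℝ) :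
    pwNorm p P W x ^ p =
      ∑' N : P, (∑' j : N.1, ENNReal.ofReal ((x j.1) ^ 2 * (W j.1) ^ 2)) ^ (p / 2) := by
  rw [pwNorm, ← ENNReal.rpow_mul, one_div, inv_mul_cancel₀ hp.ne', ENNReal.rpow_one]

theorem famNorm_lt_top {α : Type*} {p : ℝ} (hp : 2 < p) {𝒞 : Set (PWPair α)}
    (h𝒞 : IsPWFamily 𝒞) {x : α → ℝ} {F : Finset α} (hx : ∀ a ∉ F, x a = 0) :
    famNorm p 𝒞 x < ⊤ := by
  set R : ℝ≥0∞ := ∑ a ∈ F, ENNReal.ofReal (x a ^ 2) with hR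
  have hRtop : R < ⊤ := ENNReal.sum_lt_top.2 fun _ _ => ENNReal.ofReal_lt_top
  have hRt : ∑' a, ENNReal.ofReal (x a ^ 2) = R :=
    tsum_eq_sum fun a ha => by simp [hx a ha]
  have hbound : (R * R ^ (p / 2 - 1)) ^ (1 / p) < ⊤ :=
    ENNReal.rpow_lt_top_of_nonneg (by positivity)
      (ENNReal.mul_lt_top hRtop (ENNReal.rpow_lt_top_of_nonneg (by linarith) hRtop.ne)).ne
  refine lt_of_le_of_lt (iSup₂_le fun PW hPW => ?_) hbound
  obtain ⟨⟨-, hdisj, -⟩, hW⟩ := h𝒞 PW hPW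
  unfold pwNorm
  gcongr
  have hterm : ∀ N : PW.1, ∑' j : N.1, ENNReal.ofReal (x j.1 ^ 2 * PW.2 j.1 ^ 2) ≤
      ∑' j : N.1, ENNReal.ofReal (x j.1 ^ 2) := fun N => by
    gcongr with j
    exact mul_le_of_le_one_right (sq_nonneg _) (pow_le_one₀ (hW _).1.le (hW _).2)
  have hsum : ∑' N : PW.1, ∑' j : N.1, ENNReal.ofReal (x j.1 ^ 2) ≤ R := by
    rw [← ENNReal.tsum_sigma (fun (N : PW.1) (j : N.1) => ENNReal.ofReal (x j.1 ^ 2)), ← hRt]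
    refine ENNReal.tsum_comp_le_tsum_of_injective (f := fun s : (N : PW.1) × N.1 => s.2.1) ?_
      (fun a => ENNReal.ofReal (x a ^ 2))
    rintro ⟨N, j, hj⟩ ⟨N', j', hj'⟩ (rfl : j = j')
    have hNN : N = N' := Subtype.ext <| by
      by_contra hne
      exact Set.disjoint_left.1 (hdisj N.2 N'.2 hne) hj hj'
    subst hNN
    rfl
  have hsingle : ∀ N : PW.1, ∑' j : N.1, ENNReal.ofReal (x j.1 ^ 2) ≤ R := fun N =>
    (ENNReal.le_tsum N).trans hsum
  calc _ ≤ ∑' N : PW.1, (∑' j : N.1, ENNReal.ofReal (x j.1 ^ 2)) * R ^ (p / 2 - 1) := by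
        refine ENNReal.tsum_le_tsum fun N => ?_
        calc _ ≤ (∑' j : N.1, ENNReal.ofReal (x j.1 ^ 2)) ^ (1 + (p / 2 - 1)) := by
              rw [add_sub_cancel]
              exact ENNReal.rpow_le_rpow (hterm N) (by linarith)
          _ = (∑' j : N.1, ENNReal.ofReal (x j.1 ^ 2)) *
                (∑' j : N.1, ENNReal.ofReal (x j.1 ^ 2)) ^ (p / 2 - 1) := by
              rw [ENNReal.rpow_add_of_nonneg _ _ zero_le_one (by linarith), ENNReal.rpow_one]
          _ ≤ _ := by
              gcongr
              · linarith
              · exact hsingle N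
    _ ≤ _ := by
        rw [ENNReal.tsum_mul_right]
        gcongr

theorem coordVec_apply_of_ne {α : Type*} {a b : α} (h : b ≠ a) : coordVec a b = 0 := by
  simp [coordVec, h]

/-- A map that is linear on `X(𝒞)` and bounded below satisfies a lower estimate on
finite combinations of the images of the coordinate basis. -/
theorem lower_estimate_of_boundedBelow {α Ω : Type*} [MeasurableSpace Ω] {μ : Measure Ω}
    {p : ℝ} (hp : 2 < p) [Fact (1 ≤ ENNReal.ofReal p)] {𝒞 : Set (PWPair α)}
    (h𝒞 : IsPWFamily 𝒞) (S : (α → ℝ) → Lp ℝ (ENNReal.ofReal p) μ) {k : ℝ}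
    (hadd : ∀ x y, famNorm p 𝒞 x < ⊤ → famNorm p 𝒞 y < ⊤ → S (x + y) = S x + S y)
    (hsmul : ∀ (r : ℝ) (x), famNorm p 𝒞 x < ⊤ → S (r • x) = r • S x)
    (hlb : ∀ x, famNorm p 𝒞 x < ⊤ →
      ENNReal.ofReal k * famNorm p 𝒞 x ≤ ENNReal.ofReal ‖S x‖)
    {PW : PWPair α} (hPW : PW ∈ 𝒞) (F : Finset α) (x : α → ℝ) (hx : ∀ a ∉ F, x a = 0) :
    ENNReal.ofReal k ^ p *
        ∑' N : PW.1, (∑' j : N.1, ENNReal.ofReal (x j.1 ^ 2 * PW.2 j.1 ^ 2)) ^ (p / 2) ≤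
      ∫⁻ s, ‖∑ a ∈ F, x a * S (coordVec a) s‖ₑ ^ p ∂μ := by
  classical
  have hp0 : 0 < p := by linarith
  have hcoord : ∀ a, famNorm p 𝒞 (coordVec a) < ⊤ := fun a =>
    famNorm_lt_top hp h𝒞 (F := {a}) fun b hb => coordVec_apply_of_ne (by simpa using hb)
  have hlin : ∀ F' : Finset α, S (∑ a ∈ F', x a • coordVec a) =ᵐ[μ]
      fun s => ∑ a ∈ F', x a * S (coordVec a) s := by
    intro F'
    induction F' using Finset.induction_on with
    | empty =>
      have h0 : S 0 = 0 := by
        have h := hsmul 0 0 (famNorm_lt_top hp h𝒞 (F := ∅) (by simp))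
        simpa using h
      simp only [Finset.sum_empty, h0]
      exact Lp.coeFn_zero _ _ _
    | insert a F' ha ih =>
      have h1 : famNorm p 𝒞 (x a • coordVec a) < ⊤ :=
        famNorm_lt_top hp h𝒞 (F := {a}) fun b hb => by
          simp [coordVec_apply_of_ne (show b ≠ a by simpa using hb)]
      have h2 : famNorm p 𝒞 (∑ a ∈ F', x a • coordVec a) < ⊤ :=
        famNorm_lt_top hp h𝒞 (F := F') fun b hb => by
          rw [Finset.sum_apply]
          refine Finset.sum_eq_zero fun c hc => ?_
          simp [coordVec_apply_of_ne (show b ≠ c by rintro rfl; exact hb hc)]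
      rw [Finset.sum_insert ha, hadd _ _ h1 h2, hsmul _ _ (hcoord a)]
      filter_upwards [ih, Lp.coeFn_add (x a • S (coordVec a)) (S (∑ a ∈ F', x a • coordVec a)),
        Lp.coeFn_smul (x a) (S (coordVec a))] with s hs1 hs2 hs3
      rw [hs2, Pi.add_apply, hs1, hs3, Finset.sum_insert ha, Pi.smul_apply, smul_eq_mul]
  have hxF : ∑ a ∈ F, x a • coordVec a = x := by
    ext b
    rw [Finset.sum_apply]
    by_cases hb : b ∈ F
    · rw [Finset.sum_eq_single b]
      · simp [coordVec]
      · intro c _ hc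
        simp [coordVec_apply_of_ne hc.symm]
      · exact fun h => absurd hb h
    · rw [hx b hb]
      refine Finset.sum_eq_zero fun c hc => ?_
      simp [coordVec_apply_of_ne (show b ≠ c by rintro rfl; exact hb hc)]
  have hS := hlin F
  rw [hxF] at hS
  have hfin : ENNReal.ofReal k * pwNorm p PW.1 PW.2 x ≤ eLpNorm (S x) (ENNReal.ofReal p) μ := by
    rw [← Lp.enorm_def, ← ofReal_norm]
    refine le_trans ?_ (hlb x (famNorm_lt_top hp h𝒞 hx))
    gcongr
    exact le_iSup₂ (f := fun (PW : PWPair α) (_ : PW ∈ 𝒞) => pwNorm p PW.1 PW.2 x) PW hPW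
  rw [eLpNorm_congr_ae hS, eLpNorm_eq_lintegral_rpow_enorm_toReal (by simpa using hp0)
    ENNReal.ofReal_ne_top, ENNReal.toReal_ofReal hp0.le] at hfin
  rw [← pwNorm_rpow hp0, ← ENNReal.mul_rpow_of_nonneg _ _ hp0.le]
  refine (ENNReal.rpow_le_rpow hfin hp0.le).trans (le_of_eq ?_)
  rw [← ENNReal.rpow_mul, one_div, inv_mul_cancel₀ hp0.ne', ENNReal.rpow_one]

theorem tsum_subtype_eq_sum {α : Type*} (N : Set α) (F : Finset α) (h : α → ℝ≥0∞)
    (hF : ∀ a ∉ F, h a = 0) : ∑' a : N, h a.1 = ∑ a : F, N.indicator h a.1 := by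
  rw [tsum_subtype, tsum_eq_sum (s := F), Finset.sum_coe_sort F (N.indicator h)]
  intro a ha
  simp [hF a ha]

/-- Lower estimate for tensor products: if `X = X(𝒞)`, `Y = X(𝒟)`
(families with the envelope property), and `S, T` embed them into `L_p([0,1])`
(bounded above and below), then there is `C > 0` such that for all finitely supported
scalars `c` and all `(P,(w_a)) ∈ 𝒞`, `(Q,(w'_b)) ∈ 𝒟`,
`‖Σ c_{a,b} Sx_a ⊗ Ty_b‖_{L_p([0,1]²)}
  ≥ C (Σ_{p₀∈P,q₀∈Q} (Σ_{a∈p₀,b∈q₀} c_{a,b}² w_a² w'_b²)^{p/2})^{1/p}`. -/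
theorem statement12 {A B : Type*} [Countable A] [Countable B] (p : ℝ) (hp : 2 < p)
    [Fact (1 ≤ ENNReal.ofReal p)]
    (𝒞 : Set (PWPair A)) (𝒟 : Set (PWPair B))
    (h𝒞 : IsPWFamily 𝒞) (h𝒟 : IsPWFamily 𝒟)
    (henv𝒞 : EnvelopeProp 𝒞) (henv𝒟 : EnvelopeProp 𝒟)
    (S : (A → ℝ) → MeasureTheory.Lp ℝ (ENNReal.ofReal p)
      (volume : Measure ↥(Set.Icc (0 : ℝ) 1)))
    (T : (B → ℝ) → MeasureTheory.Lp ℝ (ENNReal.ofReal p)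
      (volume : Measure ↥(Set.Icc (0 : ℝ) 1)))
    (MS cS MT cT : ℝ) (hcS : 0 < cS) (hcT : 0 < cT)
    (hSadd : ∀ x y, famNorm p 𝒞 x < ⊤ → famNorm p 𝒞 y < ⊤ → S (x + y) = S x + S y)
    (hSsmul : ∀ (r : ℝ) (x), famNorm p 𝒞 x < ⊤ → S (r • x) = r • S x)
    (hSub : ∀ x, famNorm p 𝒞 x < ⊤ →
      ENNReal.ofReal ‖S x‖ ≤ ENNReal.ofReal MS * famNorm p 𝒞 x)
    (hSlb : ∀ x, famNorm p 𝒞 x < ⊤ →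
      ENNReal.ofReal cS * famNorm p 𝒞 x ≤ ENNReal.ofReal ‖S x‖)
    (hTadd : ∀ x y, famNorm p 𝒟 x < ⊤ → famNorm p 𝒟 y < ⊤ → T (x + y) = T x + T y)
    (hTsmul : ∀ (r : ℝ) (x), famNorm p 𝒟 x < ⊤ → T (r • x) = r • T x)
    (hTub : ∀ x, famNorm p 𝒟 x < ⊤ →
      ENNReal.ofReal ‖T x‖ ≤ ENNReal.ofReal MT * famNorm p 𝒟 x)
    (hTlb : ∀ x, famNorm p 𝒟 x < ⊤ →
      ENNReal.ofReal cT * famNorm p 𝒟 x ≤ ENNReal.ofReal ‖T x‖) :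
    ∃ C : ℝ, 0 < C ∧
      ∀ c : A × B →₀ ℝ, ∀ PW ∈ 𝒞, ∀ QV ∈ 𝒟,
        ENNReal.ofReal C *
          (∑' (N : PW.1) (Mq : QV.1),
            (∑' (a : N.1) (b : Mq.1),
              ENNReal.ofReal ((c (a.1, b.1)) ^ 2 * (PW.2 a.1) ^ 2 * (QV.2 b.1) ^ 2))
            ^ (p / 2)) ^ (1 / p)
        ≤ MeasureTheory.eLpNorm
            (fun st : ↥(Set.Icc (0 : ℝ) 1) × ↥(Set.Icc (0 : ℝ) 1) =>
              ∑ ab ∈ c.support, c ab * (S (coordVec ab.1)) st.1 * (T (coordVec ab.2)) st.2)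
            (ENNReal.ofReal p) (volume.prod volume) := by
  classical
  have hp0 : 0 < p := by linarith
  set K : ℝ := 2 * Real.exp (p ^ 2 / 2) with hK
  have hK0 : 0 < K := by positivity
  refine ⟨cS * cT * K ^ (-(1 / p)), by positivity, fun c PW hPW QV hQV => ?_⟩
  set F : Finset A := c.support.image Prod.fst with hF
  set G : Finset B := c.support.image Prod.snd with hG
  have hcF : ∀ a ∉ F, ∀ b, c (a, b) = 0 := fun a ha b => by
    by_contra h
    exact ha (Finset.mem_image.2 ⟨(a, b), Finsupp.mem_support_iff.2 h, rfl⟩)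
  have hcG : ∀ b ∉ G, ∀ a, c (a, b) = 0 := fun b hb a => by
    by_contra h
    exact hb (Finset.mem_image.2 ⟨(a, b), Finsupp.mem_support_iff.2 h, rfl⟩)
  have hSm : ∀ a, Measurable (S (coordVec a)) := fun a => (Lp.stronglyMeasurable _).measurable
  have hTm : ∀ b, Measurable (T (coordVec b)) := fun b => (Lp.stronglyMeasurable _).measurable
  have hlowS := lower_estimate_of_boundedBelow hp h𝒞 S hSadd hSsmul hSlb hPW F
  have hlowT := lower_estimate_of_boundedBelow hp h𝒟 T hTadd hTsmul hTlb hQV G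
  have hsq := lower_estimate_squareFunction (ι := F) hp QV.1 QV.2 G (fun b => T (coordVec b)) hTm _
    hlowT
  have hmain : ENNReal.ofReal cS ^ p * (ENNReal.ofReal cT ^ p *
      ∑' (N : PW.1) (Mq : QV.1), (∑' (a : N.1) (b : Mq.1),
        ENNReal.ofReal ((c (a.1, b.1)) ^ 2 * (PW.2 a.1) ^ 2 * (QV.2 b.1) ^ 2)) ^ (p / 2)) ≤
      ENNReal.ofReal K * ∫⁻ t, ∫⁻ s, ‖∑ a ∈ F,
        (∑ b ∈ G, c (a, b) * T (coordVec b) t) * S (coordVec a) s‖ₑ ^ p := by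
    calc _ ≤ ENNReal.ofReal cS ^ p * ∑' N : PW.1, ENNReal.ofReal K *
          ∫⁻ t, (∑' a : N.1, ENNReal.ofReal
            ((∑ b ∈ G, c (a.1, b) * T (coordVec b) t) ^ 2 * PW.2 a.1 ^ 2)) ^ (p / 2) := by
          rw [← ENNReal.tsum_mul_left]
          refine mul_le_mul' le_rfl (ENNReal.tsum_le_tsum fun N => ?_)
          refine (le_of_eq ?_).trans ((hsq (fun i b => N.1.indicator PW.2 i.1 * c (i.1, b))
            fun i b hb => by simp [hcG b hb]).trans (le_of_eq ?_))
          · refine congrArg _ (tsum_congr fun M => congrArg (· ^ (p / 2)) ?_)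
            rw [ENNReal.tsum_comm]
            refine tsum_congr fun b => ?_
            rw [tsum_subtype_eq_sum N.1 F (fun a => ENNReal.ofReal
              (c (a, b.1) ^ 2 * PW.2 a ^ 2 * QV.2 b.1 ^ 2)) fun a ha => by simp [hcF a ha]]
            refine Finset.sum_congr rfl fun a _ => ?_
            by_cases h : a.1 ∈ N.1 <;> simp [h]
            congr 1
            ring
          · refine congrArg _ (lintegral_congr fun t => congrArg (· ^ (p / 2)) ?_)
            rw [tsum_subtype_eq_sum N.1 F (fun a => ENNReal.ofReal
              ((∑ b ∈ G, c (a, b) * T (coordVec b) t) ^ 2 * PW.2 a ^ 2))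
              fun a ha => by simp [hcF a ha]]
            refine Finset.sum_congr rfl fun a _ => ?_
            simp_rw [mul_assoc, ← Finset.mul_sum]
            by_cases h : a.1 ∈ N.1 <;> simp [h]
            congr 1
            ring
      _ ≤ ENNReal.ofReal cS ^ p * (ENNReal.ofReal K * ∫⁻ t, ∑' N : PW.1,
          (∑' a : N.1, ENNReal.ofReal
            ((∑ b ∈ G, c (a.1, b) * T (coordVec b) t) ^ 2 * PW.2 a.1 ^ 2)) ^ (p / 2)) := by
          rw [ENNReal.tsum_mul_left]
          gcongr
          refine tsum_lintegral_le fun N => ?_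
          refine Measurable.pow_const (Measurable.tsum fun a => ?_) _
          fun_prop
      _ = ENNReal.ofReal K * ∫⁻ t, ENNReal.ofReal cS ^ p * ∑' N : PW.1,
          (∑' a : N.1, ENNReal.ofReal
            ((∑ b ∈ G, c (a.1, b) * T (coordVec b) t) ^ 2 * PW.2 a.1 ^ 2)) ^ (p / 2) := by
          rw [lintegral_const_mul' _ _
            (ENNReal.rpow_lt_top_of_nonneg hp0.le ENNReal.ofReal_ne_top).ne]
          ring
      _ ≤ _ := by
          gcongr with t
          exact hlowS (fun a => ∑ b ∈ G, c (a, b) * T (coordVec b) t)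
            fun a ha => by simp [hcF a ha]
  have hfun : ∀ st : ↥(Set.Icc (0 : ℝ) 1) × ↥(Set.Icc (0 : ℝ) 1),
      ∑ ab ∈ c.support, c ab * (S (coordVec ab.1)) st.1 * (T (coordVec ab.2)) st.2 =
        ∑ a ∈ F, (∑ b ∈ G, c (a, b) * T (coordVec b) st.2) * S (coordVec a) st.1 := by
    intro st
    rw [Finset.sum_subset (s₂ := F ×ˢ G), Finset.sum_product]
    · simp_rw [Finset.sum_mul]
      exact Finset.sum_congr rfl fun a _ => Finset.sum_congr rfl fun b _ => by ring
    · exact fun ab hab => Finset.mem_product.2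
        ⟨Finset.mem_image_of_mem _ hab, Finset.mem_image_of_mem _ hab⟩
    · intro ab _ hab
      simp [Finsupp.notMem_support_iff.1 hab]
  simp_rw [hfun]
  rw [eLpNorm_eq_lintegral_rpow_enorm_toReal (by simpa using hp0) ENNReal.ofReal_ne_top,
    ENNReal.toReal_ofReal hp0.le, lintegral_prod_symm' _ (by fun_prop)]
  rw [← ENNReal.rpow_le_rpow_iff hp0, ENNReal.mul_rpow_of_nonneg _ _ hp0.le, ← ENNReal.rpow_mul,
    ← ENNReal.rpow_mul, one_div, inv_mul_cancel₀ hp0.ne', ENNReal.rpow_one, ENNReal.rpow_one,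
    ← ENNReal.mul_le_mul_iff_right (ENNReal.ofReal_pos.2 hK0).ne' ENNReal.ofReal_ne_top]
  refine le_trans (le_of_eq ?_) hmain
  rw [← mul_assoc, ← mul_assoc]
  congr 1
  rw [ENNReal.ofReal_rpow_of_pos (by positivity), ENNReal.ofReal_rpow_of_pos hcS,
    ENNReal.ofReal_rpow_of_pos hcT, ← ENNReal.ofReal_mul hK0.le,
    ← ENNReal.ofReal_mul (by positivity), Real.mul_rpow (by positivity) (by positivity),
    Real.mul_rpow hcS.le hcT.le, ← Real.rpow_mul hK0.le, neg_mul, inv_mul_cancel₀ hp0.ne',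
    Real.rpow_neg_one]
  congr 1
  field_simp
end
end

section
/- Let p > 2 and let X = X(𝒫), Y = X(𝒬) where 𝒫 = {(P_i,(w^i_a)) : 1 ≤ i ≤ M} and 𝒬 = {(Q_j,(v^j_b)) : 1 ≤ j ≤ N} are finite families of partition–weight pairs on countable sets A and B, with natural coordinate bases (x_a)_{a∈A} and (y_b)_{b∈B}, and let S : X → L_p([0,1]) and T : Y → L_p([0,1]) be bounded linear maps that are bounded below. Then the L_p tensor product of X and Y has a norm given by finitely many partitions and weights: there exist constants c, C > 0 such that for all scalars (c_{a,b}) with only finitely many nonzero, c·M(c_{a,b}) ≤ ‖Σ_{a,b} c_{a,b} (Sx_a ⊗ Ty_b)‖_{L_p([0,1]²)} ≤ C·M(c_{a,b}), where M(c_{a,b}) = max_{1≤i≤M, 1≤j≤N} (Σ_{p₀∈P_i, q₀∈Q_j} (Σ_{a∈p₀, b∈q₀} c_{a,b}² (w^i_a)² (v^j_b)²)^{p/2})^{1/p}. -/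
open scoped ENNReal
open MeasureTheory Filter

noncomputable section

variable {α : Type*}

/-- The sign `±1` encoded by a boolean. -/
def boolSign (b : Bool) : ℝ := if b then 1 else -1

lemma sum_boolSign_mul_boolSign {K : Type*} [Fintype K] [DecidableEq K] {k l : K} (h : k ≠ l) :
    ∑ ε : K → Bool, boolSign (ε k) * boolSign (ε l) = 0 := by
  let e : (K → Bool) ≃ (K → Bool) :=
    Equiv.piCongrRight fun j => if j = k then Equiv.boolNot else Equiv.refl Bool
  have h1 := Equiv.sum_comp e fun ε : K → Bool => boolSign (ε k) * boolSign (ε l)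
  have h2 : ∀ ε : K → Bool, boolSign (e ε k) * boolSign (e ε l)
      = -(boolSign (ε k) * boolSign (ε l)) := by
    intro ε
    have hk : e ε k = !(ε k) := by simp [e]
    have hl : e ε l = ε l := by simp [e, h.symm]
    rw [hk, hl]
    cases ε k <;> cases ε l <;> simp [boolSign]
  simp only [h2, Finset.sum_neg_distrib] at h1
  linarith

lemma sum_sq_signedSum {K : Type*} [Fintype K] [DecidableEq K] (u : K → ℝ) :
    ∑ ε : K → Bool, (∑ k, boolSign (ε k) * u k) ^ 2 = 2 ^ Fintype.card K * ∑ k, u k ^ 2 := by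
  have h1 : ∀ ε : K → Bool, (∑ k, boolSign (ε k) * u k) ^ 2
      = ∑ k, ∑ l, (boolSign (ε k) * boolSign (ε l)) * (u k * u l) := by
    intro ε
    rw [sq, Finset.sum_mul_sum]
    refine Finset.sum_congr rfl fun k _ => Finset.sum_congr rfl fun l _ => ?_
    ring
  simp only [h1]
  rw [Finset.sum_comm, Finset.mul_sum]
  refine Finset.sum_congr rfl fun k _ => ?_
  rw [Finset.sum_comm, Finset.sum_eq_single k]
  · have : ∀ ε : K → Bool, boolSign (ε k) * boolSign (ε k) * (u k * u k) = u k ^ 2 := by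
      intro ε
      cases ε k <;> simp [boolSign, sq]
    simp [this]
  · intro l _ hl
    rw [← Finset.sum_mul, sum_boolSign_mul_boolSign hl.symm, zero_mul]
  · simp

lemma sum_exp_signedSum_le {K : Type*} [Fintype K] [DecidableEq K] (t : K → ℝ) :
    ∑ ε : K → Bool, Real.exp (∑ k, boolSign (ε k) * t k)
      ≤ 2 ^ Fintype.card K * Real.exp ((∑ k, t k ^ 2) / 2) := by
  have h1 : ∑ ε : K → Bool, Real.exp (∑ k, boolSign (ε k) * t k)
      = ∏ k, ∑ b : Bool, Real.exp (boolSign b * t k) := by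
    rw [Finset.prod_univ_sum, Fintype.piFinset_univ]
    simp [Real.exp_sum]
  have h2 : ∀ k, ∑ b : Bool, Real.exp (boolSign b * t k) = 2 * Real.cosh (t k) := by
    intro k
    simp [boolSign, Real.cosh_eq]
    ring
  rw [h1]
  simp only [h2]
  rw [Finset.prod_mul_distrib, Finset.prod_const, Finset.card_univ, Finset.sum_div, Real.exp_sum]
  gcongr
  exact Real.cosh_le_exp_half_sq _

lemma exists_sq_rpow_le_exp_add_exp (q : ℝ) (hq : 0 ≤ q) :
    ∃ C : ℝ, 0 ≤ C ∧ ∀ y : ℝ, (y ^ 2) ^ q ≤ C * (Real.exp y + Real.exp (-y)) := by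
  obtain ⟨n, hn⟩ := exists_nat_ge q
  refine ⟨1 + (2 * n).factorial, by positivity, fun y => ?_⟩
  have h1 : (y ^ 2) ^ q ≤ 1 + (y ^ 2) ^ n := by
    rcases le_total (y ^ 2) 1 with h | h
    · have := Real.rpow_le_one (sq_nonneg y) h hq
      have : 0 ≤ (y ^ 2) ^ n := by positivity
      linarith
    · have := Real.rpow_le_rpow_of_exponent_le h hn
      rw [Real.rpow_natCast] at this
      linarith
  have h2 : (y ^ 2) ^ n ≤ (2 * n).factorial * Real.exp |y| := by
    have := Real.pow_div_factorial_le_exp |y| (abs_nonneg y) (2 * n)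
    rw [div_le_iff₀ (by positivity), pow_mul, sq_abs] at this
    linarith
  have h3 : Real.exp |y| ≤ Real.exp y + Real.exp (-y) := by
    rcases abs_cases y with ⟨h, _⟩ | ⟨h, _⟩ <;> rw [h] <;>
      linarith [Real.exp_pos y, Real.exp_pos (-y)]
  have h4 : 1 ≤ Real.exp |y| := Real.one_le_exp (abs_nonneg y)
  calc (y ^ 2) ^ q ≤ (1 + (2 * n).factorial) * Real.exp |y| := by linarith
    _ ≤ _ := by gcongr

/-- Upper Khintchine inequality for Rademacher averages. -/
lemma exists_khintchine_upper (q : ℝ) (hq : 0 < q) :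
    ∃ C : ℝ, 0 ≤ C ∧ ∀ (K : Type*) [Fintype K] [DecidableEq K] (u : K → ℝ),
      ∑ ε : K → Bool, ((∑ k, boolSign (ε k) * u k) ^ 2) ^ q
        ≤ C * 2 ^ Fintype.card K * (∑ k, u k ^ 2) ^ q := by
  obtain ⟨C, hC, h⟩ := exists_sq_rpow_le_exp_add_exp q hq.le
  refine ⟨C * (2 * Real.exp (1 / 2)), by positivity, fun K _ _ u => ?_⟩
  set σ := ∑ k, u k ^ 2 with hσ
  have hσ0 : 0 ≤ σ := Finset.sum_nonneg fun k _ => sq_nonneg _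
  rcases hσ0.eq_or_lt with h0 | hpos
  · have hu : ∀ k, u k = 0 := fun k => by
      have := (Finset.sum_eq_zero_iff_of_nonneg fun k _ => sq_nonneg (u k)).1 h0.symm k
        (Finset.mem_univ k)
      exact pow_eq_zero_iff two_ne_zero |>.1 this
    simp [hu, Real.zero_rpow hq.ne', ← h0]
  have hs : Real.sqrt σ ≠ 0 := (Real.sqrt_pos.2 hpos).ne'
  have hsq : Real.sqrt σ ^ 2 = σ := Real.sq_sqrt hσ0
  set t : K → ℝ := fun k => u k / Real.sqrt σ with ht
  have hts : ∑ k, t k ^ 2 = 1 := by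
    simp only [ht, div_pow, hsq, ← Finset.sum_div]
    exact div_self hpos.ne'
  have hterm : ∀ ε : K → Bool, ((∑ k, boolSign (ε k) * u k) ^ 2) ^ q
      ≤ σ ^ q * (C * (Real.exp (∑ k, boolSign (ε k) * t k)
        + Real.exp (∑ k, boolSign (ε k) * (-t k)))) := by
    intro ε
    have e1 : ∑ k, boolSign (ε k) * u k = Real.sqrt σ * ∑ k, boolSign (ε k) * t k := by
      rw [Finset.mul_sum]
      refine Finset.sum_congr rfl fun k _ => ?_
      simp only [ht]
      field_simp
    rw [e1, mul_pow, hsq, Real.mul_rpow hσ0 (sq_nonneg _)]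
    have := h (∑ k, boolSign (ε k) * t k)
    simp only [mul_neg, Finset.sum_neg_distrib]
    gcongr
  have hp := sum_exp_signedSum_le t
  have hm := sum_exp_signedSum_le fun k => -t k
  simp only [neg_sq, hts] at hp hm
  calc _ ≤ ∑ ε : K → Bool, σ ^ q * (C * (Real.exp (∑ k, boolSign (ε k) * t k)
        + Real.exp (∑ k, boolSign (ε k) * (-t k)))) := Finset.sum_le_sum fun ε _ => hterm ε
    _ = σ ^ q * (C * (∑ ε : K → Bool, Real.exp (∑ k, boolSign (ε k) * t k)
        + ∑ ε : K → Bool, Real.exp (∑ k, boolSign (ε k) * (-t k)))) := by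
      rw [← Finset.mul_sum, ← Finset.mul_sum, Finset.sum_add_distrib]
    _ ≤ σ ^ q * (C * (2 ^ Fintype.card K * Real.exp (1 / 2)
        + 2 ^ Fintype.card K * Real.exp (1 / 2))) := by gcongr
    _ = _ := by ring

lemma hilbert_khintchine_lower {K β : Type*} [Fintype K] [DecidableEq K] {q : ℝ} (hq : 1 ≤ q)
    (G : Finset β) (Z : K → β → ℝ) :
    2 ^ Fintype.card K * (∑ b ∈ G, ∑ k, Z k b ^ 2) ^ q
      ≤ ∑ ε : K → Bool, (∑ b ∈ G, (∑ k, boolSign (ε k) * Z k b) ^ 2) ^ q := by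
  have h2 : (0 : ℝ) < 2 ^ Fintype.card K := by positivity
  have key := Real.rpow_arith_mean_le_arith_mean_rpow Finset.univ
    (fun _ : K → Bool => ((2 : ℝ) ^ Fintype.card K)⁻¹)
    (fun ε => ∑ b ∈ G, (∑ k, boolSign (ε k) * Z k b) ^ 2)
    (fun _ _ => by positivity)
    (by simp) (fun _ _ => by positivity) hq
  rw [← Finset.mul_sum, ← Finset.mul_sum, Finset.sum_comm] at key
  simp only [sum_sq_signedSum] at key
  rw [← Finset.mul_sum, inv_mul_cancel_left₀ h2.ne', le_inv_mul_iff₀ h2] at key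
  exact key

lemma exists_hilbert_khintchine_upper (q : ℝ) (hq : 1 ≤ q) :
    ∃ C : ℝ, 0 ≤ C ∧ ∀ (K : Type*) [Fintype K] [DecidableEq K] {β : Type*}
      (G : Finset β) (Z : K → β → ℝ),
      ∑ ε : K → Bool, (∑ b ∈ G, (∑ k, boolSign (ε k) * Z k b) ^ 2) ^ q
        ≤ C * 2 ^ Fintype.card K * (∑ b ∈ G, ∑ k, Z k b ^ 2) ^ q := by
  have hq0 : 0 < q := by linarith
  obtain ⟨C, hC, h⟩ := exists_khintchine_upper q hq0
  refine ⟨C, hC, fun K _ _ β G Z => ?_⟩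
  set τ : β → ℝ := fun b => ∑ k, Z k b ^ 2 with hτ
  have hτ0 : ∀ b, 0 ≤ τ b := fun b => Finset.sum_nonneg fun k _ => sq_nonneg _
  have hZ : ∀ b, τ b = 0 → ∀ k, Z k b = 0 := fun b hb k =>
    pow_eq_zero_iff two_ne_zero |>.1 <|
      (Finset.sum_eq_zero_iff_of_nonneg fun k _ => sq_nonneg (Z k b)).1 hb k (Finset.mem_univ k)
  set σ := ∑ b ∈ G, τ b with hσ
  have hσ0 : 0 ≤ σ := Finset.sum_nonneg fun b _ => hτ0 b
  rcases hσ0.eq_or_lt with h0 | hpos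
  · have hz : ∀ b ∈ G, ∀ k, Z k b = 0 := fun b hb =>
      hZ b ((Finset.sum_eq_zero_iff_of_nonneg fun b _ => hτ0 b).1 h0.symm b hb)
    have : ∀ ε : K → Bool, ∑ b ∈ G, (∑ k, boolSign (ε k) * Z k b) ^ 2 = 0 := fun ε =>
      Finset.sum_eq_zero fun b hb => by simp [hz b hb]
    simp [this, Real.zero_rpow hq0.ne', ← h0]
  have hterm : ∀ ε : K → Bool, (∑ b ∈ G, (∑ k, boolSign (ε k) * Z k b) ^ 2) ^ q
      ≤ ∑ b ∈ G, τ b / σ * (σ ^ q * ((τ b)⁻¹ ^ q * ((∑ k, boolSign (ε k) * Z k b) ^ 2) ^ q)) := by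
    intro ε
    have key := Real.rpow_arith_mean_le_arith_mean_rpow G (fun b => τ b / σ)
      (fun b => σ * ((τ b)⁻¹ * (∑ k, boolSign (ε k) * Z k b) ^ 2))
      (fun b _ => div_nonneg (hτ0 b) hσ0)
      (by rw [← Finset.sum_div, ← hσ, div_self hpos.ne'])
      (fun b _ => mul_nonneg hσ0 (mul_nonneg (inv_nonneg.2 (hτ0 b)) (sq_nonneg _))) hq
    convert key using 2
    · refine Finset.sum_congr rfl fun b _ => ?_
      by_cases hb : τ b = 0
      · simp [hZ b hb]
      · field_simp
    · rw [Real.mul_rpow hσ0 (mul_nonneg (inv_nonneg.2 (hτ0 _)) (sq_nonneg _)),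
        Real.mul_rpow (inv_nonneg.2 (hτ0 _)) (sq_nonneg _)]
  calc _ ≤ ∑ ε : K → Bool, ∑ b ∈ G,
        τ b / σ * (σ ^ q * ((τ b)⁻¹ ^ q * ((∑ k, boolSign (ε k) * Z k b) ^ 2) ^ q)) :=
        Finset.sum_le_sum fun ε _ => hterm ε
    _ = ∑ b ∈ G, τ b / σ * (σ ^ q * ((τ b)⁻¹ ^ q *
          ∑ ε : K → Bool, ((∑ k, boolSign (ε k) * Z k b) ^ 2) ^ q)) := by
      rw [Finset.sum_comm]
      simp only [Finset.mul_sum]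
    _ ≤ ∑ b ∈ G, τ b / σ * (σ ^ q * (C * 2 ^ Fintype.card K)) := by
      refine Finset.sum_le_sum fun b _ => ?_
      have : (τ b)⁻¹ ^ q * ∑ ε : K → Bool, ((∑ k, boolSign (ε k) * Z k b) ^ 2) ^ q
          ≤ C * 2 ^ Fintype.card K := by
        rcases (hτ0 b).eq_or_lt with hb | hb
        · rw [← hb]
          simp only [inv_zero, Real.zero_rpow hq0.ne', zero_mul]
          positivity
        · rw [Real.inv_rpow (hτ0 b), inv_mul_le_iff₀ (by positivity)]
          linarith [h K fun k => Z k b]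
      have := hτ0 b
      gcongr
    _ = C * 2 ^ Fintype.card K * σ ^ q := by
      rw [← Finset.sum_mul, ← Finset.sum_div, ← hσ, div_self hpos.ne']
      ring

lemma tsum_subtype_eq_sum_filter {β : Type*} (s : Set β) [DecidablePred (· ∈ s)] (G : Finset β)
    (f : β → ℝ≥0∞) (hf : ∀ b ∉ G, f b = 0) : ∑' b : s, f b = ∑ b ∈ G with b ∈ s, f b := by
  rw [tsum_subtype, tsum_eq_sum (s := G), Finset.sum_filter]
  · refine Finset.sum_congr rfl fun b _ => ?_
    simp [Set.indicator_apply]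
  · intro b hb
    simp [Set.indicator_apply, hf b hb]

/-- The sum over a family of partition–weight pairs of the `p`-th powers of the associated norms,
as a function of the squares of the coordinates; here `q = p / 2`. -/
def pwGauge {β : Type*} {n : ℕ} (q : ℝ) (Q : Fin n → Set (Set β)) (v : Fin n → β → ℝ)
    (f : β → ℝ≥0∞) : ℝ≥0∞ :=
  ∑ j, ∑' M : Q j, (∑' b : M.1, f b * ENNReal.ofReal (v j b ^ 2)) ^ q

lemma exists_finset_block_sums_eq {K β : Type*} [Fintype K] (z : K → β →₀ ℝ) (v : β → ℝ)
    (s : Set β) :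
    ∃ G : Finset β,
      (∑' b : s, (∑ k, ENNReal.ofReal (z k b ^ 2)) * ENNReal.ofReal (v b ^ 2)
        = ENNReal.ofReal (∑ b ∈ G, ∑ k, (z k b * v b) ^ 2)) ∧
      ∀ r : K → ℝ, ∑' b : s, ENNReal.ofReal ((∑ k, r k * z k b) ^ 2) * ENNReal.ofReal (v b ^ 2)
        = ENNReal.ofReal (∑ b ∈ G, (∑ k, r k * (z k b * v b)) ^ 2) := by
  classical
  set G := Finset.univ.biUnion fun k => (z k).support with hG
  have hz : ∀ b ∉ G, ∀ k, z k b = 0 := by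
    intro b hb k
    simp only [hG, Finset.mem_biUnion, Finset.mem_univ, true_and, not_exists] at hb
    exact Finsupp.notMem_support_iff.1 (hb k)
  refine ⟨G.filter (· ∈ s), ?_, fun r => ?_⟩
  · rw [tsum_subtype_eq_sum_filter s G
      (fun b => (∑ k, ENNReal.ofReal (z k b ^ 2)) * ENNReal.ofReal (v b ^ 2))
      (fun b hb => by simp [hz b hb]),
      ENNReal.ofReal_sum_of_nonneg fun b _ => by positivity]
    refine Finset.sum_congr rfl fun b _ => ?_
    rw [← ENNReal.ofReal_sum_of_nonneg fun k _ => by positivity,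
      ← ENNReal.ofReal_mul (by positivity), Finset.sum_mul]
    simp only [mul_pow]
  · rw [tsum_subtype_eq_sum_filter s G
      (fun b => ENNReal.ofReal ((∑ k, r k * z k b) ^ 2) * ENNReal.ofReal (v b ^ 2))
      (fun b hb => by simp [hz b hb]),
      ENNReal.ofReal_sum_of_nonneg fun b _ => by positivity]
    refine Finset.sum_congr rfl fun b _ => ?_
    rw [← ENNReal.ofReal_mul (by positivity), ← mul_pow, Finset.sum_mul]
    simp only [mul_assoc]

lemma pwGauge_khintchine_lower {K β : Type*} [Fintype K] [DecidableEq K] {n : ℕ} {q : ℝ}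
    (hq : 1 ≤ q) (Q : Fin n → Set (Set β)) (v : Fin n → β → ℝ) (z : K → β →₀ ℝ) :
    2 ^ Fintype.card K * pwGauge q Q v (fun b => ∑ k, ENNReal.ofReal (z k b ^ 2))
      ≤ ∑ ε : K → Bool,
        pwGauge q Q v (fun b => ENNReal.ofReal ((∑ k, boolSign (ε k) * z k b) ^ 2)) := by
  have hq0 : 0 ≤ q := by linarith
  unfold pwGauge
  rw [Finset.sum_comm, Finset.mul_sum]
  refine Finset.sum_le_sum fun j _ => ?_
  rw [← Summable.tsum_finsetSum fun _ _ => ENNReal.summable, ← ENNReal.tsum_mul_left]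
  refine ENNReal.tsum_le_tsum fun M => ?_
  obtain ⟨G, h1, h2⟩ := exists_finset_block_sums_eq z (v j) M.1
  rw [h1]
  simp only [h2]
  simp only [ENNReal.ofReal_rpow_of_nonneg (Finset.sum_nonneg fun b _ => sq_nonneg _) hq0]
  rw [ENNReal.ofReal_rpow_of_nonneg
      (Finset.sum_nonneg fun b _ => Finset.sum_nonneg fun k _ => sq_nonneg _) hq0,
    ← ENNReal.ofReal_sum_of_nonneg fun ε _ => by positivity]
  have h22 : (2 : ℝ≥0∞) ^ Fintype.card K = ENNReal.ofReal (2 ^ Fintype.card K) := by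
    rw [ENNReal.ofReal_pow (by norm_num)]
    simp
  rw [h22, ← ENNReal.ofReal_mul (by positivity)]
  exact ENNReal.ofReal_le_ofReal (hilbert_khintchine_lower hq G fun k b => z k b * v j b)

lemma exists_pwGauge_khintchine_upper (q : ℝ) (hq : 1 ≤ q) :
    ∃ C : NNReal, ∀ (K : Type*) [Fintype K] [DecidableEq K] {β : Type*} {n : ℕ}
      (Q : Fin n → Set (Set β)) (v : Fin n → β → ℝ) (z : K → β →₀ ℝ),
      ∑ ε : K → Bool,
          pwGauge q Q v (fun b => ENNReal.ofReal ((∑ k, boolSign (ε k) * z k b) ^ 2))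
        ≤ C * 2 ^ Fintype.card K *
          pwGauge q Q v (fun b => ∑ k, ENNReal.ofReal (z k b ^ 2)) := by
  have hq0 : 0 ≤ q := by linarith
  obtain ⟨C, hC, h⟩ := exists_hilbert_khintchine_upper q hq
  refine ⟨C.toNNReal, fun K _ _ β n Q v z => ?_⟩
  unfold pwGauge
  rw [Finset.sum_comm, Finset.mul_sum]
  refine Finset.sum_le_sum fun j _ => ?_
  rw [← Summable.tsum_finsetSum fun _ _ => ENNReal.summable, ← ENNReal.tsum_mul_left]
  refine ENNReal.tsum_le_tsum fun M => ?_
  obtain ⟨G, h1, h2⟩ := exists_finset_block_sums_eq z (v j) M.1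
  rw [h1]
  simp only [h2]
  simp only [ENNReal.ofReal_rpow_of_nonneg (Finset.sum_nonneg fun b _ => sq_nonneg _) hq0]
  rw [ENNReal.ofReal_rpow_of_nonneg
      (Finset.sum_nonneg fun b _ => Finset.sum_nonneg fun k _ => sq_nonneg _) hq0,
    ← ENNReal.ofReal_sum_of_nonneg fun ε _ => by positivity]
  have h22 : (C.toNNReal : ℝ≥0∞) * (2 : ℝ≥0∞) ^ Fintype.card K
      = ENNReal.ofReal (C * 2 ^ Fintype.card K) := by
    rw [ENNReal.ofReal_mul hC, ENNReal.ofReal_pow (by norm_num)]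
    simp [ENNReal.ofReal]
  rw [h22, ← ENNReal.ofReal_mul (by positivity)]
  exact ENNReal.ofReal_le_ofReal (h K G fun k b => z k b * v j b)

lemma ofReal_khintchine_lower {K : Type*} [Fintype K] [DecidableEq K] {q : ℝ} (hq : 1 ≤ q)
    (u : K → ℝ) :
    2 ^ Fintype.card K * (∑ k, ENNReal.ofReal (u k ^ 2)) ^ q
      ≤ ∑ ε : K → Bool, ENNReal.ofReal ((∑ k, boolSign (ε k) * u k) ^ 2) ^ q := by
  have hq0 : 0 ≤ q := by linarith
  have h := hilbert_khintchine_lower hq {()} fun k _ => u k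
  simp only [Finset.sum_singleton] at h
  rw [← ENNReal.ofReal_sum_of_nonneg fun k _ => sq_nonneg _]
  simp only [ENNReal.ofReal_rpow_of_nonneg (sq_nonneg _) hq0]
  rw [ENNReal.ofReal_rpow_of_nonneg (by positivity) hq0,
    ← ENNReal.ofReal_sum_of_nonneg fun ε _ => by positivity]
  have h22 : (2 : ℝ≥0∞) ^ Fintype.card K = ENNReal.ofReal (2 ^ Fintype.card K) := by
    rw [ENNReal.ofReal_pow (by norm_num)]
    simp
  rw [h22, ← ENNReal.ofReal_mul (by positivity)]
  exact ENNReal.ofReal_le_ofReal h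

lemma exists_ofReal_khintchine_upper (q : ℝ) (hq : 1 ≤ q) :
    ∃ C : NNReal, ∀ (K : Type*) [Fintype K] [DecidableEq K] (u : K → ℝ),
      ∑ ε : K → Bool, ENNReal.ofReal ((∑ k, boolSign (ε k) * u k) ^ 2) ^ q
        ≤ C * 2 ^ Fintype.card K * (∑ k, ENNReal.ofReal (u k ^ 2)) ^ q := by
  have hq0 : 0 ≤ q := by linarith
  obtain ⟨C, hC, h⟩ := exists_khintchine_upper q (by linarith)
  refine ⟨C.toNNReal, fun K _ _ u => ?_⟩
  rw [← ENNReal.ofReal_sum_of_nonneg fun k _ => sq_nonneg _]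
  simp only [ENNReal.ofReal_rpow_of_nonneg (sq_nonneg _) hq0]
  rw [ENNReal.ofReal_rpow_of_nonneg (by positivity) hq0,
    ← ENNReal.ofReal_sum_of_nonneg fun ε _ => by positivity]
  have h22 : (C.toNNReal : ℝ≥0∞) * (2 : ℝ≥0∞) ^ Fintype.card K
      = ENNReal.ofReal (C * 2 ^ Fintype.card K) := by
    rw [ENNReal.ofReal_mul hC, ENNReal.ofReal_pow (by norm_num)]
    simp [ENNReal.ofReal]
  rw [h22, ← ENNReal.ofReal_mul (by positivity)]
  exact ENNReal.ofReal_le_ofReal (h K u)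

/-- On finitely supported vectors, the `p`-th power of the `L_p` norm of the image under `L` is
equivalent to the gauge of the family `(Q, v)`, with constant `C`; here `q = p / 2`. -/
def IsGaugeEmbedding {Ω β : Type*} [MeasurableSpace Ω] {μ : Measure Ω} {r : ℝ≥0∞} {n : ℕ} (q : ℝ)
    (Q : Fin n → Set (Set β)) (v : Fin n → β → ℝ) (L : (β →₀ ℝ) →ₗ[ℝ] Lp ℝ r μ) (C : NNReal) :
    Prop :=
  ∀ z : β →₀ ℝ,
    ∫⁻ t, ENNReal.ofReal (L z t ^ 2) ^ q ∂μ
      ≤ C * pwGauge q Q v (fun b => ENNReal.ofReal (z b ^ 2)) ∧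
    pwGauge q Q v (fun b => ENNReal.ofReal (z b ^ 2))
      ≤ C * ∫⁻ t, ENNReal.ofReal (L z t ^ 2) ^ q ∂μ

lemma Lp_coeFn_sum_smul {Ω K : Type*} [MeasurableSpace Ω] {μ : Measure Ω} {r : ℝ≥0∞}
    (s : Finset K) (c : K → ℝ) (f : K → Lp ℝ r μ) :
    ⇑(∑ k ∈ s, c k • f k) =ᵐ[μ] fun t => ∑ k ∈ s, c k * f k t := by
  have h : ∀ᵐ t ∂μ, ∀ k ∈ s, (c k • f k : Lp ℝ r μ) t = c k * f k t := by
    refine (Filter.eventually_all_finset s).2 fun k _ => ?_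
    filter_upwards [Lp.coeFn_smul (c k) (f k)] with t ht
    simp [ht]
  filter_upwards [h, Lp.coeFn_finsetSum s fun k => c k • f k] with t ht h2
  rw [h2, Finset.sum_apply]
  exact Finset.sum_congr rfl ht

lemma measurable_ofReal_sq_rpow {Ω : Type*} [MeasurableSpace Ω] {f : Ω → ℝ} (hf : Measurable f)
    (q : ℝ) : Measurable fun t => ENNReal.ofReal (f t ^ 2) ^ q :=
  (hf.pow_const 2).ennreal_ofReal.pow_const q

/-- Equivalence of the square function of a finite family in the range of a gauge embedding with
the gauge of the coordinatewise square function. -/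
lemma IsGaugeEmbedding.exists_squareFunction_equiv {Ω β : Type*} [MeasurableSpace Ω]
    {μ : Measure Ω} {r : ℝ≥0∞} {n : ℕ} {q : ℝ} (hq : 1 ≤ q) {Q : Fin n → Set (Set β)}
    {v : Fin n → β → ℝ} {L : (β →₀ ℝ) →ₗ[ℝ] Lp ℝ r μ} {C : NNReal}
    (hL : IsGaugeEmbedding q Q v L C) :
    ∃ D : NNReal, ∀ (K : Type*) [Fintype K] (z : K → β →₀ ℝ),
      ∫⁻ t, (∑ k, ENNReal.ofReal (L (z k) t ^ 2)) ^ q ∂μ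
        ≤ D * pwGauge q Q v (fun b => ∑ k, ENNReal.ofReal (z k b ^ 2)) ∧
      pwGauge q Q v (fun b => ∑ k, ENNReal.ofReal (z k b ^ 2))
        ≤ D * ∫⁻ t, (∑ k, ENNReal.ofReal (L (z k) t ^ 2)) ^ q ∂μ := by
  obtain ⟨C₁, h₁⟩ := exists_pwGauge_khintchine_upper q hq
  obtain ⟨C₂, h₂⟩ := exists_ofReal_khintchine_upper q hq
  refine ⟨C * C₁ + C * C₂, fun K _ z => ?_⟩
  classical
  have hmeas : ∀ k, Measurable (L (z k)) := fun k => (Lp.stronglyMeasurable _).measurable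
  have hsq : Measurable fun t => (∑ k, ENNReal.ofReal (L (z k) t ^ 2)) ^ q :=
    (Finset.measurable_sum _ fun k _ => ((hmeas k).pow_const 2).ennreal_ofReal).pow_const q
  have hsign : ∀ ε : K → Bool,
      ∫⁻ t, ENNReal.ofReal ((∑ k, boolSign (ε k) * L (z k) t) ^ 2) ^ q ∂μ
        = ∫⁻ t, ENNReal.ofReal (L (∑ k, boolSign (ε k) • z k) t ^ 2) ^ q ∂μ := by
    intro ε
    refine lintegral_congr_ae ?_
    simp only [map_sum, map_smul]
    filter_upwards [Lp_coeFn_sum_smul Finset.univ (fun k => boolSign (ε k)) fun k => L (z k)]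
      with t ht
    rw [ht]
  have hcoord : ∀ (ε : K → Bool) (b : β),
      (∑ k, boolSign (ε k) • z k) b = ∑ k, boolSign (ε k) * z k b := by
    intro ε b
    simp [Finsupp.finsetSum_apply]
  have hint : ∫⁻ t, ∑ ε : K → Bool,
        ENNReal.ofReal ((∑ k, boolSign (ε k) * L (z k) t) ^ 2) ^ q ∂μ
      = ∑ ε : K → Bool, ∫⁻ t, ENNReal.ofReal (L (∑ k, boolSign (ε k) • z k) t ^ 2) ^ q ∂μ := by
    rw [lintegral_finsetSum]
    · exact Finset.sum_congr rfl fun ε _ => hsign ε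
    · intro ε _
      exact measurable_ofReal_sq_rpow
        (Finset.measurable_sum _ fun k _ => (hmeas k).const_mul _) q
  have h20 : (2 : ℝ≥0∞) ^ Fintype.card K ≠ 0 := by simp
  have h2t : (2 : ℝ≥0∞) ^ Fintype.card K ≠ ⊤ := by finiteness
  constructor
  · rw [← ENNReal.mul_le_mul_iff_right h20 h2t, ← lintegral_const_mul _ hsq]
    calc _ ≤ ∫⁻ t, ∑ ε : K → Bool,
          ENNReal.ofReal ((∑ k, boolSign (ε k) * L (z k) t) ^ 2) ^ q ∂μ :=
          lintegral_mono fun t => ofReal_khintchine_lower hq fun k => L (z k) t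
      _ ≤ ∑ ε : K → Bool, C * pwGauge q Q v
          (fun b => ENNReal.ofReal ((∑ k, boolSign (ε k) * z k b) ^ 2)) := by
        rw [hint]
        refine Finset.sum_le_sum fun ε _ => ?_
        simpa only [hcoord] using (hL (∑ k, boolSign (ε k) • z k)).1
      _ ≤ C * (C₁ * 2 ^ Fintype.card K *
          pwGauge q Q v (fun b => ∑ k, ENNReal.ofReal (z k b ^ 2))) := by
        rw [← Finset.mul_sum]
        gcongr
        exact h₁ K Q v z
      _ = 2 ^ Fintype.card K * (((C * C₁ : NNReal) : ℝ≥0∞) *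
          pwGauge q Q v (fun b => ∑ k, ENNReal.ofReal (z k b ^ 2))) := by
        push_cast
        ring
      _ ≤ _ := by
        gcongr
        exact le_self_add
  · rw [← ENNReal.mul_le_mul_iff_right h20 h2t]
    calc _ ≤ ∑ ε : K → Bool, pwGauge q Q v
          (fun b => ENNReal.ofReal ((∑ k, boolSign (ε k) * z k b) ^ 2)) :=
          pwGauge_khintchine_lower hq Q v z
      _ ≤ C * ∫⁻ t, ∑ ε : K → Bool,
          ENNReal.ofReal ((∑ k, boolSign (ε k) * L (z k) t) ^ 2) ^ q ∂μ := by
        rw [hint, Finset.mul_sum]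
        refine Finset.sum_le_sum fun ε _ => ?_
        simpa only [hcoord] using (hL (∑ k, boolSign (ε k) • z k)).2
      _ ≤ C * ∫⁻ t, C₂ * 2 ^ Fintype.card K *
          (∑ k, ENNReal.ofReal (L (z k) t ^ 2)) ^ q ∂μ := by
        gcongr with t
        exact h₂ K fun k => L (z k) t
      _ = 2 ^ Fintype.card K * (((C * C₂ : NNReal) : ℝ≥0∞) *
          ∫⁻ t, (∑ k, ENNReal.ofReal (L (z k) t ^ 2)) ^ q ∂μ) := by
        rw [lintegral_const_mul _ hsq]
        push_cast
        ring
      _ ≤ _ := by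
        gcongr
        exact le_add_self

lemma countable_of_pairwiseDisjoint_nonempty {α : Type*} [Countable α] {P : Set (Set α)}
    (h₁ : ∀ N ∈ P, N.Nonempty) (h₂ : P.PairwiseDisjoint id) : Countable P := by
  choose f hf using fun N : P => h₁ N.1 N.2
  refine Function.Injective.countable (f := f) fun M N h => ?_
  by_contra hne
  exact Set.disjoint_left.1 (h₂ M.2 N.2 fun h' => hne (Subtype.ext h')) (hf M) (h ▸ hf N)

/-- The `p`-th power of the tensor norm associated with two partition–weight pairs; `q = p / 2`. -/
def tensorGauge {A B : Type*} (q : ℝ) (P : Set (Set A)) (w : A → ℝ) (Q : Set (Set B)) (v : B → ℝ)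
    (c : A × B → ℝ) : ℝ≥0∞ :=
  ∑' (N : P) (M : Q), (∑' (a : N.1) (b : M.1),
    ENNReal.ofReal ((c (a.1, b.1)) ^ 2 * (w a.1) ^ 2 * (v b.1) ^ 2)) ^ q

lemma exists_tensor_equiv {Ω₁ Ω₂ A B : Type*} [MeasurableSpace Ω₁] [MeasurableSpace Ω₂]
    {μ : Measure Ω₁} {ν : Measure Ω₂} [SFinite μ] [SFinite ν] {r₁ r₂ : ℝ≥0∞} {m n : ℕ} {q : ℝ}
    (hq : 1 ≤ q)
    {P : Fin m → Set (Set A)} (hP : ∀ i, Countable (P i)) {w : Fin m → A → ℝ}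
    {Q : Fin n → Set (Set B)} {v : Fin n → B → ℝ}
    {L₁ : (A →₀ ℝ) →ₗ[ℝ] Lp ℝ r₁ μ} {L₂ : (B →₀ ℝ) →ₗ[ℝ] Lp ℝ r₂ ν} {C₁ C₂ : NNReal}
    (h₁ : IsGaugeEmbedding q P w L₁ C₁) (h₂ : IsGaugeEmbedding q Q v L₂ C₂) :
    ∃ D : NNReal, ∀ coef : A × B →₀ ℝ,
      ∫⁻ st, ENNReal.ofReal ((∑ ab ∈ coef.support, coef ab * L₁ (Finsupp.single ab.1 1) st.1 *
          L₂ (Finsupp.single ab.2 1) st.2) ^ 2) ^ q ∂(μ.prod ν)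
        ≤ D * ∑ i, ∑ j, tensorGauge q (P i) (w i) (Q j) (v j) coef ∧
      ∑ i, ∑ j, tensorGauge q (P i) (w i) (Q j) (v j) coef
        ≤ D * ∫⁻ st, ENNReal.ofReal ((∑ ab ∈ coef.support,
          coef ab * L₁ (Finsupp.single ab.1 1) st.1 *
            L₂ (Finsupp.single ab.2 1) st.2) ^ 2) ^ q ∂(μ.prod ν) := by
  classical
  obtain ⟨D, hD⟩ := h₂.exists_squareFunction_equiv hq
  refine ⟨C₁ * D, fun coef => ?_⟩
  set E := coef.support.image Prod.fst with hE
  set E' := coef.support.image Prod.snd with hE'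
  have hcE : ∀ a ∉ E, ∀ b, coef (a, b) = 0 := by
    intro a ha b
    by_contra h
    exact ha (Finset.mem_image.2 ⟨(a, b), Finsupp.mem_support_iff.2 h, rfl⟩)
  have hcE' : ∀ b ∉ E', ∀ a, coef (a, b) = 0 := by
    intro b hb a
    by_contra h
    exact hb (Finset.mem_image.2 ⟨(a, b), Finsupp.mem_support_iff.2 h, rfl⟩)
  set e₁ : A → Ω₁ → ℝ := fun a => L₁ (Finsupp.single a 1) with he₁
  set e₂ : B → Ω₂ → ℝ := fun b => L₂ (Finsupp.single b 1) with he₂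
  have hm₁ : ∀ a, Measurable (e₁ a) := fun a => (Lp.stronglyMeasurable _).measurable
  have hm₂ : ∀ b, Measurable (e₂ b) := fun b => (Lp.stronglyMeasurable _).measurable
  set u : A → Ω₂ → ℝ := fun a t => ∑ b ∈ E', coef (a, b) * e₂ b t with hu
  have hmu : ∀ a, Measurable (u a) := fun a =>
    Finset.measurable_sum _ fun b _ => (hm₂ b).const_mul _
  have huE : ∀ a ∉ E, ∀ t, u a t = 0 := by
    intro a ha t
    simp [hu, hcE a ha]
  have hF : ∀ s t, ∑ ab ∈ coef.support, coef ab * e₁ ab.1 s * e₂ ab.2 t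
      = ∑ a ∈ E, u a t * e₁ a s := by
    intro s t
    have hsub : coef.support ⊆ E ×ˢ E' := fun ab hab =>
      Finset.mem_product.2 ⟨Finset.mem_image_of_mem _ hab, Finset.mem_image_of_mem _ hab⟩
    rw [Finset.sum_subset hsub fun ab _ hab => by
      simp [Finsupp.notMem_support_iff.1 hab], Finset.sum_product]
    refine Finset.sum_congr rfl fun a _ => ?_
    rw [hu, Finset.sum_mul]
    refine Finset.sum_congr rfl fun b _ => ?_
    ring
  -- Tonelli, with the inner integral over the first variable
  have hI : ∫⁻ st, ENNReal.ofReal ((∑ ab ∈ coef.support, coef ab * e₁ ab.1 st.1 *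
        e₂ ab.2 st.2) ^ 2) ^ q ∂(μ.prod ν)
      = ∫⁻ t, ∫⁻ s, ENNReal.ofReal ((∑ a ∈ E, u a t * e₁ a s) ^ 2) ^ q ∂μ ∂ν := by
    rw [lintegral_prod_symm']
    · simp only [hF]
    · refine measurable_ofReal_sq_rpow (Finset.measurable_sum _ fun ab _ => ?_) q
      exact (((hm₁ _).comp measurable_fst).const_mul _).mul ((hm₂ _).comp measurable_snd)
  have hinner : ∀ t,
      ∫⁻ s, ENNReal.ofReal ((∑ a ∈ E, u a t * e₁ a s) ^ 2) ^ q ∂μ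
        ≤ C₁ * pwGauge q P w (fun a => ENNReal.ofReal (u a t ^ 2)) ∧
      pwGauge q P w (fun a => ENNReal.ofReal (u a t ^ 2))
        ≤ C₁ * ∫⁻ s, ENNReal.ofReal ((∑ a ∈ E, u a t * e₁ a s) ^ 2) ^ q ∂μ := by
    intro t
    have hx : ∀ a, (∑ a ∈ E, u a t • Finsupp.single a (1 : ℝ)) a = u a t := by
      intro a
      by_cases ha : a ∈ E
      · simp [Finsupp.finsetSum_apply, Finsupp.single_apply, ha]
      · simp [Finsupp.finsetSum_apply, Finsupp.single_apply, ha, huE a ha]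
    have hL : ∫⁻ s, ENNReal.ofReal (L₁ (∑ a ∈ E, u a t • Finsupp.single a (1 : ℝ)) s ^ 2) ^ q ∂μ
        = ∫⁻ s, ENNReal.ofReal ((∑ a ∈ E, u a t * e₁ a s) ^ 2) ^ q ∂μ := by
      refine lintegral_congr_ae ?_
      simp only [map_sum, map_smul]
      filter_upwards [Lp_coeFn_sum_smul E (fun a => u a t) fun a => L₁ (Finsupp.single a 1)]
        with s hs
      rw [hs]
    have := h₁ (∑ a ∈ E, u a t • Finsupp.single a (1 : ℝ))
    simpa only [hx, hL] using this
  -- the blocks of the first family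
  have hblock : ∀ i (N : P i) t, ∑' a : N.1, ENNReal.ofReal (u a t ^ 2) *
        ENNReal.ofReal (w i a ^ 2)
      = ∑ a ∈ E with a ∈ N.1, ENNReal.ofReal (u a t ^ 2) * ENNReal.ofReal (w i a ^ 2) :=
    fun i N t => tsum_subtype_eq_sum_filter N.1 E
      (fun a => ENNReal.ofReal (u a t ^ 2) * ENNReal.ofReal (w i a ^ 2))
      (fun a ha => by simp [huE a ha t])
  have hgauge_int : ∫⁻ t, pwGauge q P w (fun a => ENNReal.ofReal (u a t ^ 2)) ∂ν
      = ∑ i, ∑' N : P i, ∫⁻ t, (∑ a ∈ E with a ∈ N.1,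
          ENNReal.ofReal (u a t ^ 2) * ENNReal.ofReal (w i a ^ 2)) ^ q ∂ν := by
    have hmb : ∀ i (N : P i), Measurable fun t => (∑ a ∈ E with a ∈ N.1,
        ENNReal.ofReal (u a t ^ 2) * ENNReal.ofReal (w i a ^ 2)) ^ q := fun i N =>
      (Finset.measurable_sum _ fun a _ =>
        ((hmu a).pow_const 2).ennreal_ofReal.mul_const _).pow_const q
    simp only [pwGauge, hblock]
    rw [lintegral_finsetSum]
    · refine Finset.sum_congr rfl fun i _ => ?_
      rw [lintegral_tsum fun N => (hmb i N).aemeasurable]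
    · exact fun i _ => Measurable.tsum fun N => hmb i N
  have hgauge_meas : Measurable fun t => pwGauge q P w (fun a => ENNReal.ofReal (u a t ^ 2)) := by
    simp only [pwGauge, hblock]
    exact Finset.measurable_sum _ fun i _ => Measurable.tsum fun N =>
      (Finset.measurable_sum _ fun a _ =>
        ((hmu a).pow_const 2).ennreal_ofReal.mul_const _).pow_const q
  have hpiece : ∀ i (N : P i),
      ∫⁻ t, (∑ a ∈ E with a ∈ N.1,
          ENNReal.ofReal (u a t ^ 2) * ENNReal.ofReal (w i a ^ 2)) ^ q ∂ν
        ≤ D * ∑ j, ∑' M : Q j, (∑' (a : N.1) (b : M.1),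
          ENNReal.ofReal ((coef (a.1, b.1)) ^ 2 * (w i a.1) ^ 2 * (v j b.1) ^ 2)) ^ q ∧
      ∑ j, ∑' M : Q j, (∑' (a : N.1) (b : M.1),
          ENNReal.ofReal ((coef (a.1, b.1)) ^ 2 * (w i a.1) ^ 2 * (v j b.1) ^ 2)) ^ q
        ≤ D * ∫⁻ t, (∑ a ∈ E with a ∈ N.1,
          ENNReal.ofReal (u a t ^ 2) * ENNReal.ofReal (w i a ^ 2)) ^ q ∂ν := by
    intro i N
    set z : A → B →₀ ℝ := fun a => ∑ b ∈ E', (coef (a, b) * w i a) • Finsupp.single b (1 : ℝ)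
      with hz
    have hzb : ∀ a b, z a b = coef (a, b) * w i a := by
      intro a b
      by_cases hb : b ∈ E'
      · simp [hz, Finsupp.finsetSum_apply, Finsupp.single_apply, hb]
      · simp [hz, Finsupp.finsetSum_apply, Finsupp.single_apply, hb, hcE' b hb]
    have hzL : ∀ a, L₂ (z a) =ᵐ[ν] fun t => u a t * w i a := by
      intro a
      simp only [hz, map_sum, map_smul]
      filter_upwards [Lp_coeFn_sum_smul E' (fun b => coef (a, b) * w i a)
        fun b => L₂ (Finsupp.single b 1)] with t ht
      rw [ht, hu, Finset.sum_mul]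
      refine Finset.sum_congr rfl fun b _ => ?_
      simp only [he₂]
      ring
    have key := hD (E.filter (· ∈ N.1)) fun a => z a
    have e1 : ∫⁻ t, (∑ a : E.filter (· ∈ N.1), ENNReal.ofReal (L₂ (z a) t ^ 2)) ^ q ∂ν
        = ∫⁻ t, (∑ a ∈ E with a ∈ N.1,
          ENNReal.ofReal (u a t ^ 2) * ENNReal.ofReal (w i a ^ 2)) ^ q ∂ν := by
      have hall : ∀ᵐ t ∂ν, ∀ a ∈ E, L₂ (z a) t = u a t * w i a :=
        (Filter.eventually_all_finset E).2 fun a _ => hzL a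
      refine lintegral_congr_ae ?_
      filter_upwards [hall] with t ht
      rw [Finset.sum_coe_sort (E.filter (· ∈ N.1)) fun a => ENNReal.ofReal (L₂ (z a) t ^ 2)]
      congr 1
      refine Finset.sum_congr rfl fun a ha => ?_
      rw [ht a (Finset.mem_filter.1 ha).1, mul_pow, ENNReal.ofReal_mul (sq_nonneg _)]
    have e2 : pwGauge q Q v
          (fun b => ∑ a : E.filter (· ∈ N.1), ENNReal.ofReal (z a b ^ 2))
        = ∑ j, ∑' M : Q j, (∑' (a : N.1) (b : M.1),
          ENNReal.ofReal ((coef (a.1, b.1)) ^ 2 * (w i a.1) ^ 2 * (v j b.1) ^ 2)) ^ q := by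
      unfold pwGauge
      refine Finset.sum_congr rfl fun j _ => tsum_congr fun M => ?_
      congr 1
      rw [ENNReal.tsum_comm]
      refine tsum_congr fun b => ?_
      beta_reduce
      rw [tsum_subtype_eq_sum_filter N.1 E
        (fun a => ENNReal.ofReal ((coef (a, b.1)) ^ 2 * (w i a) ^ 2 * (v j b.1) ^ 2))
        (fun a ha => by simp [hcE a ha]),
        Finset.sum_coe_sort (E.filter (· ∈ N.1)) fun a => ENNReal.ofReal (z a b ^ 2),
        Finset.sum_mul]
      refine Finset.sum_congr rfl fun a _ => ?_
      rw [hzb, mul_pow, ← ENNReal.ofReal_mul (by positivity)]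
    rwa [e1, e2] at key
  have hswap : ∑ i, ∑ j, tensorGauge q (P i) (w i) (Q j) (v j) coef
      = ∑ i, ∑' N : P i, ∑ j, ∑' M : Q j, (∑' (a : N.1) (b : M.1),
          ENNReal.ofReal ((coef (a.1, b.1)) ^ 2 * (w i a.1) ^ 2 * (v j b.1) ^ 2)) ^ q := by
    refine Finset.sum_congr rfl fun i _ => ?_
    rw [Summable.tsum_finsetSum fun _ _ => ENNReal.summable]
    rfl
  rw [hI, hswap]
  set R := ∑ i, ∑' N : P i, ∑ j, ∑' M : Q j, (∑' (a : N.1) (b : M.1),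
    ENNReal.ofReal ((coef (a.1, b.1)) ^ 2 * (w i a.1) ^ 2 * (v j b.1) ^ 2)) ^ q with hR
  constructor
  · calc _ ≤ ∫⁻ t, C₁ * pwGauge q P w (fun a => ENNReal.ofReal (u a t ^ 2)) ∂ν :=
          lintegral_mono fun t => (hinner t).1
      _ ≤ C₁ * (D * R) := by
        rw [lintegral_const_mul _ hgauge_meas, hgauge_int]
        gcongr
        rw [hR, Finset.mul_sum]
        gcongr with i
        rw [← ENNReal.tsum_mul_left]
        exact ENNReal.tsum_le_tsum fun N => (hpiece i N).1
      _ = _ := by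
        push_cast
        ring
  · calc _ ≤ D * ∫⁻ t, pwGauge q P w (fun a => ENNReal.ofReal (u a t ^ 2)) ∂ν := by
          rw [hgauge_int, hR, Finset.mul_sum]
          gcongr with i
          rw [← ENNReal.tsum_mul_left]
          exact ENNReal.tsum_le_tsum fun N => (hpiece i N).2
      _ ≤ D * ∫⁻ t, C₁ * ∫⁻ s, ENNReal.ofReal ((∑ a ∈ E, u a t * e₁ a s) ^ 2) ^ q ∂μ ∂ν := by
        gcongr with t
        exact (hinner t).2
      _ = _ := by
        rw [lintegral_const_mul' _ _ ENNReal.coe_ne_top]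
        push_cast
        ring

lemma pwGauge_finsupp_lt_top {β : Type*} {n : ℕ} {q : ℝ} (hq : 0 < q) {Q : Fin n → Set (Set β)}
    (hQ : ∀ j, (Q j).PairwiseDisjoint id) (v : Fin n → β → ℝ) (z : β →₀ ℝ) :
    pwGauge q Q v (fun b => ENNReal.ofReal (z b ^ 2)) < ⊤ := by
  classical
  refine ENNReal.sum_lt_top.2 fun j _ => ?_
  have hsum : ∀ M : Q j, ∑' b : M.1, ENNReal.ofReal (z b ^ 2) * ENNReal.ofReal (v j b ^ 2)
      = ∑ b ∈ z.support with b ∈ M.1, ENNReal.ofReal (z b ^ 2) * ENNReal.ofReal (v j b ^ 2) :=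
    fun M => tsum_subtype_eq_sum_filter M.1 z.support
      (fun b => ENNReal.ofReal (z b ^ 2) * ENNReal.ofReal (v j b ^ 2))
      (fun b hb => by simp [Finsupp.notMem_support_iff.1 hb])
  simp only [hsum]
  have hfin : {M : Q j | ∃ b ∈ z.support, b ∈ M.1}.Finite := by
    have : {M : Q j | ∃ b ∈ z.support, b ∈ M.1}
        = ⋃ b ∈ z.support, {M : Q j | b ∈ M.1} := by
      ext M
      simp
    rw [this]
    refine z.support.finite_toSet.biUnion fun b _ => Set.Subsingleton.finite fun M hM N hN => ?_
    by_contra hne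
    exact Set.disjoint_left.1 (hQ j M.2 N.2 fun h => hne (Subtype.ext h)) hM hN
  rw [tsum_eq_sum (s := hfin.toFinset)]
  · refine ENNReal.sum_lt_top.2 fun M _ => ?_
    refine ENNReal.rpow_lt_top_of_nonneg hq.le (ENNReal.sum_lt_top.2 fun b _ => ?_).ne
    exact ENNReal.mul_lt_top ENNReal.ofReal_lt_top ENNReal.ofReal_lt_top
  · intro M hM
    rw [Finset.sum_eq_zero, ENNReal.zero_rpow_of_pos hq]
    intro b hb
    rw [Finset.mem_filter] at hb
    exact absurd (hfin.mem_toFinset.2 ⟨b, hb.1, hb.2⟩) hM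

lemma iSup_rpow_equiv_sum {ι : Type*} [Fintype ι] {p : ℝ} (hp : 0 < p) (X : ι → ℝ≥0∞) :
    (⨆ i, X i ^ (1 / p)) ^ p ≤ ∑ i, X i ∧
      ∑ i, X i ≤ Fintype.card ι * (⨆ i, X i ^ (1 / p)) ^ p := by
  constructor
  · rw [← ENNReal.le_rpow_inv_iff hp, ← one_div]
    refine iSup_le fun i => ?_
    gcongr
    exact Finset.single_le_sum (fun _ _ => zero_le) (Finset.mem_univ i)
  · calc ∑ i, X i ≤ ∑ _i : ι, (⨆ i, X i ^ (1 / p)) ^ p := by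
          refine Finset.sum_le_sum fun i _ => ?_
          rw [← ENNReal.rpow_inv_le_iff hp, ← one_div]
          exact le_iSup (fun i => X i ^ (1 / p)) i
      _ = _ := by simp

lemma famNorm_range_eq_iSup {β : Type*} {n : ℕ} (p : ℝ) (Q : Fin n → Set (Set β))
    (v : Fin n → β → ℝ) (x : β → ℝ) :
    famNorm p (Set.range fun j => (Q j, v j)) x
      = ⨆ j, (∑' M : Q j, (∑' b : M.1, ENNReal.ofReal (x b ^ 2) *
          ENNReal.ofReal (v j b ^ 2)) ^ (p / 2)) ^ (1 / p) := by
  rw [famNorm, iSup_range]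
  simp only [pwNorm, ENNReal.ofReal_mul (sq_nonneg _)]

lemma famNorm_rpow_equiv_pwGauge {β : Type*} {n : ℕ} {p : ℝ} (hp : 0 < p)
    (Q : Fin n → Set (Set β)) (v : Fin n → β → ℝ) (x : β → ℝ) :
    famNorm p (Set.range fun j => (Q j, v j)) x ^ p
        ≤ pwGauge (p / 2) Q v (fun b => ENNReal.ofReal (x b ^ 2)) ∧
      pwGauge (p / 2) Q v (fun b => ENNReal.ofReal (x b ^ 2))
        ≤ n * famNorm p (Set.range fun j => (Q j, v j)) x ^ p := by
  rw [famNorm_range_eq_iSup]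
  simpa only [pwGauge, Fintype.card_fin] using iSup_rpow_equiv_sum hp fun j =>
    ∑' M : Q j, (∑' b : M.1, ENNReal.ofReal (x b ^ 2) * ENNReal.ofReal (v j b ^ 2)) ^ (p / 2)

lemma lintegral_ofReal_sq_rpow_eq {Ω : Type*} [MeasurableSpace Ω] (μ : Measure Ω) {p : ℝ}
    (hp : 0 < p) (f : Ω → ℝ) :
    ∫⁻ t, ENNReal.ofReal (f t ^ 2) ^ (p / 2) ∂μ = eLpNorm f (ENNReal.ofReal p) μ ^ p := by
  rw [eLpNorm_eq_lintegral_rpow_enorm_toReal (by simpa using hp) ENNReal.ofReal_ne_top,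
    ENNReal.toReal_ofReal hp.le, ← ENNReal.rpow_mul, one_div, inv_mul_cancel₀ hp.ne',
    ENNReal.rpow_one]
  refine lintegral_congr fun t => ?_
  rw [← sq_abs, ENNReal.ofReal_pow (abs_nonneg _), ← Real.norm_eq_abs, ofReal_norm,
    ← ENNReal.rpow_natCast, ← ENNReal.rpow_mul]
  congr 1
  push_cast
  ring

/-- A map that is linear, bounded and bounded below on the space of a finite family of
partition–weight pairs restricts to a gauge embedding of the finitely supported vectors. -/
lemma exists_isGaugeEmbedding {Ω β : Type*} [MeasurableSpace Ω] {μ : Measure Ω} {n : ℕ} {p : ℝ}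
    (hp : 0 < p) {Q : Fin n → Set (Set β)} (hQ : ∀ j, IsPartition (Q j)) (v : Fin n → β → ℝ)
    [Fact (1 ≤ ENNReal.ofReal p)]
    (T : (β → ℝ) → Lp ℝ (ENNReal.ofReal p) μ) (M c : ℝ) (hc : 0 < c)
    (hadd : ∀ x y, famNorm p (Set.range fun j => (Q j, v j)) x < ⊤ →
      famNorm p (Set.range fun j => (Q j, v j)) y < ⊤ → T (x + y) = T x + T y)
    (hsmul : ∀ (r : ℝ) (x), famNorm p (Set.range fun j => (Q j, v j)) x < ⊤ →
      T (r • x) = r • T x)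
    (hub : ∀ x, famNorm p (Set.range fun j => (Q j, v j)) x < ⊤ →
      ENNReal.ofReal ‖T x‖ ≤ ENNReal.ofReal M * famNorm p (Set.range fun j => (Q j, v j)) x)
    (hlb : ∀ x, famNorm p (Set.range fun j => (Q j, v j)) x < ⊤ →
      ENNReal.ofReal c * famNorm p (Set.range fun j => (Q j, v j)) x ≤ ENNReal.ofReal ‖T x‖) :
    ∃ (L : (β →₀ ℝ) →ₗ[ℝ] Lp ℝ (ENNReal.ofReal p) μ) (C : NNReal),
      (∀ b, L (Finsupp.single b 1) = T (coordVec b)) ∧ IsGaugeEmbedding (p / 2) Q v L C := by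
  have hfin : ∀ z : β →₀ ℝ, famNorm p (Set.range fun j => (Q j, v j)) z < ⊤ := by
    intro z
    have h := (famNorm_rpow_equiv_pwGauge hp Q v z).1.trans_lt
      (pwGauge_finsupp_lt_top (half_pos hp) (fun j => (hQ j).2.1) v z)
    rwa [ENNReal.rpow_lt_top_iff_of_pos hp] at h
  let L : (β →₀ ℝ) →ₗ[ℝ] Lp ℝ (ENNReal.ofReal p) μ :=
    { toFun := fun z => T z
      map_add' := fun x y => by rw [Finsupp.coe_add, hadd _ _ (hfin x) (hfin y)]
      map_smul' := fun r x => by rw [Finsupp.coe_smul, hsmul r _ (hfin x), RingHom.id_apply] }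
  have hnorm : ∀ z : β →₀ ℝ, ∫⁻ t, ENNReal.ofReal (L z t ^ 2) ^ (p / 2) ∂μ
      = ENNReal.ofReal ‖T z‖ ^ p := by
    intro z
    rw [lintegral_ofReal_sq_rpow_eq μ hp, ofReal_norm, Lp.enorm_def]
    rfl
  refine ⟨L, (M.toNNReal) ^ p + n * (c.toNNReal⁻¹) ^ p, fun b => ?_, fun z => ?_⟩
  · change T _ = T _
    congr 1
    ext a
    classical
    simp [coordVec, Set.indicator_apply, Finsupp.single_apply, eq_comm]
  · obtain ⟨h1, h2⟩ := famNorm_rpow_equiv_pwGauge hp Q v z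
    rw [hnorm]
    have hM : (((M.toNNReal) ^ p : NNReal) : ℝ≥0∞) = ENNReal.ofReal M ^ p := by
      rw [ENNReal.coe_rpow_of_nonneg _ hp.le]
      rfl
    have hc0 : c.toNNReal ≠ 0 := by simpa using hc
    have hc' : (((c.toNNReal⁻¹) ^ p : NNReal) : ℝ≥0∞) = (ENNReal.ofReal c)⁻¹ ^ p := by
      rw [ENNReal.coe_rpow_of_nonneg _ hp.le, ENNReal.coe_inv hc0]
      rfl
    push_cast
    rw [hM, hc']
    constructor
    · calc _ ≤ (ENNReal.ofReal M * famNorm p (Set.range fun j => (Q j, v j)) z) ^ p := by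
            gcongr
            exact hub z (hfin z)
        _ ≤ ENNReal.ofReal M ^ p * pwGauge (p / 2) Q v (fun b => ENNReal.ofReal (z b ^ 2)) := by
          rw [ENNReal.mul_rpow_of_nonneg _ _ hp.le]
          gcongr
        _ ≤ _ := by
          gcongr
          exact le_self_add
    · have hcc : famNorm p (Set.range fun j => (Q j, v j)) z
          ≤ (ENNReal.ofReal c)⁻¹ * ENNReal.ofReal ‖T z‖ := by
        rw [← ENNReal.div_eq_inv_mul, ENNReal.le_div_iff_mul_le (by simp [hc]) (by simp), mul_comm]
        exact hlb z (hfin z)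
      calc _ ≤ n * famNorm p (Set.range fun j => (Q j, v j)) z ^ p := h2
        _ ≤ n * ((ENNReal.ofReal c)⁻¹ * ENNReal.ofReal ‖T z‖) ^ p := by gcongr
        _ = n * (ENNReal.ofReal c)⁻¹ ^ p * ENNReal.ofReal ‖T z‖ ^ p := by
          rw [ENNReal.mul_rpow_of_nonneg _ _ hp.le, mul_assoc]
        _ ≤ _ := by
          gcongr
          exact le_add_self

/-- If `X` and `Y` have norms given by finitely many partitions and
weights (families `(P_i,w^i)_{i<m}` and `(Q_j,v^j)_{j<n}`) and `S, T` are isomorphic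
embeddings into `L_p([0,1])`, then the `L_p` tensor product of `X` and `Y` has a norm
given by finitely many partitions and weights: the `L_p([0,1]²)`-norm of
`Σ c_{a,b} Sx_a ⊗ Ty_b` is two-sidedly equivalent to
`max_{i,j} (Σ_{p₀∈P_i,q₀∈Q_j} (Σ_{a∈p₀,b∈q₀} c_{a,b}² (w^i_a)² (v^j_b)²)^{p/2})^{1/p}`. -/
theorem statement13 {A B : Type*} [Countable A] [Countable B] (p : ℝ) (hp : 2 < p)
    [Fact (1 ≤ ENNReal.ofReal p)]
    {m n : ℕ} (hm : 0 < m) (hn : 0 < n)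
    (P : Fin m → Set (Set A)) (w : Fin m → A → ℝ)
    (Q : Fin n → Set (Set B)) (v : Fin n → B → ℝ)
    (hP : ∀ i, IsPartition (P i)) (hw : ∀ i, IsWeight (w i))
    (hQ : ∀ j, IsPartition (Q j)) (hv : ∀ j, IsWeight (v j))
    (S : (A → ℝ) → MeasureTheory.Lp ℝ (ENNReal.ofReal p)
      (volume : Measure ↥(Set.Icc (0 : ℝ) 1)))
    (T : (B → ℝ) → MeasureTheory.Lp ℝ (ENNReal.ofReal p)
      (volume : Measure ↥(Set.Icc (0 : ℝ) 1)))
    (MS cS MT cT : ℝ) (hcS : 0 < cS) (hcT : 0 < cT)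
    (hSadd : ∀ x y, famNorm p (Set.range fun i => (P i, w i)) x < ⊤ →
      famNorm p (Set.range fun i => (P i, w i)) y < ⊤ → S (x + y) = S x + S y)
    (hSsmul : ∀ (r : ℝ) (x), famNorm p (Set.range fun i => (P i, w i)) x < ⊤ →
      S (r • x) = r • S x)
    (hSub : ∀ x, famNorm p (Set.range fun i => (P i, w i)) x < ⊤ →
      ENNReal.ofReal ‖S x‖ ≤ ENNReal.ofReal MS * famNorm p (Set.range fun i => (P i, w i)) x)
    (hSlb : ∀ x, famNorm p (Set.range fun i => (P i, w i)) x < ⊤ →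
      ENNReal.ofReal cS * famNorm p (Set.range fun i => (P i, w i)) x ≤ ENNReal.ofReal ‖S x‖)
    (hTadd : ∀ x y, famNorm p (Set.range fun j => (Q j, v j)) x < ⊤ →
      famNorm p (Set.range fun j => (Q j, v j)) y < ⊤ → T (x + y) = T x + T y)
    (hTsmul : ∀ (r : ℝ) (x), famNorm p (Set.range fun j => (Q j, v j)) x < ⊤ →
      T (r • x) = r • T x)
    (hTub : ∀ x, famNorm p (Set.range fun j => (Q j, v j)) x < ⊤ →
      ENNReal.ofReal ‖T x‖ ≤ ENNReal.ofReal MT * famNorm p (Set.range fun j => (Q j, v j)) x)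
    (hTlb : ∀ x, famNorm p (Set.range fun j => (Q j, v j)) x < ⊤ →
      ENNReal.ofReal cT * famNorm p (Set.range fun j => (Q j, v j)) x ≤ ENNReal.ofReal ‖T x‖) :
    ∃ c C : ℝ, 0 < c ∧ 0 < C ∧
      ∀ coef : A × B →₀ ℝ,
        ENNReal.ofReal c *
          (⨆ (i : Fin m) (j : Fin n),
            (∑' (N : (P i)) (Mq : (Q j)),
              (∑' (a : N.1) (b : Mq.1),
                ENNReal.ofReal ((coef (a.1, b.1)) ^ 2 * (w i a.1) ^ 2 * (v j b.1) ^ 2))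
              ^ (p / 2)) ^ (1 / p))
        ≤ MeasureTheory.eLpNorm
            (fun st : ↥(Set.Icc (0 : ℝ) 1) × ↥(Set.Icc (0 : ℝ) 1) =>
              ∑ ab ∈ coef.support,
                coef ab * (S (coordVec ab.1)) st.1 * (T (coordVec ab.2)) st.2)
            (ENNReal.ofReal p) (volume.prod volume) ∧
        MeasureTheory.eLpNorm
            (fun st : ↥(Set.Icc (0 : ℝ) 1) × ↥(Set.Icc (0 : ℝ) 1) =>
              ∑ ab ∈ coef.support,
                coef ab * (S (coordVec ab.1)) st.1 * (T (coordVec ab.2)) st.2)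
            (ENNReal.ofReal p) (volume.prod volume)
        ≤ ENNReal.ofReal C *
          (⨆ (i : Fin m) (j : Fin n),
            (∑' (N : (P i)) (Mq : (Q j)),
              (∑' (a : N.1) (b : Mq.1),
                ENNReal.ofReal ((coef (a.1, b.1)) ^ 2 * (w i a.1) ^ 2 * (v j b.1) ^ 2))
              ^ (p / 2)) ^ (1 / p)) := by
  have hp0 : 0 < p := by linarith
  obtain ⟨L₁, C₁, hL₁, h₁⟩ :=
    exists_isGaugeEmbedding hp0 hP w S MS cS hcS hSadd hSsmul hSub hSlb
  obtain ⟨L₂, C₂, hL₂, h₂⟩ :=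
    exists_isGaugeEmbedding hp0 hQ v T MT cT hcT hTadd hTsmul hTub hTlb
  obtain ⟨D, hD⟩ := exists_tensor_equiv (by linarith : 1 ≤ p / 2)
    (fun i => countable_of_pairwiseDisjoint_nonempty (hP i).1 (hP i).2.1) h₁ h₂
  set D' : NNReal := (D + 1) * (m * n + 1) with hD'
  have hD'0 : 0 < D' := by positivity
  have hroot : ∀ {x y : ℝ≥0∞}, x ^ p ≤ D' * y ^ p →
      x ≤ ENNReal.ofReal ((D' : ℝ) ^ (1 / p)) * y := by
    intro x y h
    rw [← ENNReal.rpow_le_rpow_iff hp0, ENNReal.mul_rpow_of_nonneg _ _ hp0.le,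
      ENNReal.ofReal_rpow_of_nonneg (by positivity) hp0.le, ← Real.rpow_mul (by positivity),
      one_div, inv_mul_cancel₀ hp0.ne', Real.rpow_one, ENNReal.ofReal_coe_nnreal]
    exact h
  have hCpos : 0 < (D' : ℝ) ^ (1 / p) := Real.rpow_pos_of_pos (by exact_mod_cast hD'0) _
  refine ⟨((D' : ℝ) ^ (1 / p))⁻¹, (D' : ℝ) ^ (1 / p), inv_pos.2 hCpos, hCpos, fun coef => ?_⟩
  obtain ⟨hup, hlow⟩ := hD coef
  simp only [hL₁, hL₂] at hup hlow
  rw [lintegral_ofReal_sq_rpow_eq _ hp0] at hup hlow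
  have hsup := iSup_rpow_equiv_sum hp0 fun ij : Fin m × Fin n =>
    tensorGauge (p / 2) (P ij.1) (w ij.1) (Q ij.2) (v ij.2) coef
  rw [iSup_prod, Fintype.sum_prod_type, Fintype.card_prod, Fintype.card_fin, Fintype.card_fin]
    at hsup
  simp only [tensorGauge] at hsup hup hlow
  obtain ⟨hsup₁, hsup₂⟩ := hsup
  constructor
  · rw [ENNReal.ofReal_inv_of_pos hCpos, ← ENNReal.div_eq_inv_mul]
    refine ENNReal.div_le_of_le_mul' (hroot ?_)
    refine (hsup₁.trans hlow).trans ?_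
    gcongr
    rw [hD']
    calc D ≤ D + 1 := le_self_add
      _ ≤ (D + 1) * (m * n + 1) := le_mul_of_one_le_right' le_add_self
  · refine hroot (hup.trans ?_)
    grw [hsup₂, ← mul_assoc]
    gcongr
    rw [hD']
    push_cast
    gcongr <;> exact le_self_add
end
end
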